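/- Let $M$ be a connected, oriented, complete, non-compact smooth Riemannian manifold of dimension $m$ and let $\psi : M \to \mathbb{R}^{m+1}$ be a smooth isometric immersion with spherical Gauss map (smooth unit normal field) $\nu : M \to \mathbb{S}^m \subseteq \mathbb{R}^{m+1}$. Denote by $A(X,Y) = -\langle d\nu(X), d\psi(Y)\rangle$ the second fundamental form in the direction of $\nu$, by $|A|$ its (Hilbert–Schmidt) norm, by $\mathbf{H} = \frac{1}{m}\,\mathrm{tr}(A)\,\nu$ the mean curvature vector, and by $\psi^\perp$ the component of the position vector $\psi$ normal to the immersion. Let $c \in \mathbb{R}$ and suppose that $\psi$ is a mean curvature flow soliton with respect to the position vector field with soliton constant $c$, that is, $m\mathbf{H} = c\,\psi^\perp$ on $M$. Fix $o \in M$, let $B_R$ be the geodesic ball of radius $R$ of $M$ centered at $o$, and assume that $$\liminf_{R\to+\infty} \frac{1}{R} \log \int_{B_R} e^{\frac{c}{2}|\psi|^2} = 0,$$ where the integral is taken with respect to the Riemannian volume of $M$. Assume moreover that $|A|$ is bounded on $M$ and that $$\langle b, \nu\rangle \geq \frac{1}{1+|A|^2} \quad \text{on } M$$ for some fixed vector $b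 \in \mathbb{S}^m$. Then $\psi(M)$ is a hyperplane of $\mathbb{R}^{m+1}$ orthogonal to $b$, and if $c \neq 0$ then $0 \in \psi(M)$. -/

import Mathlib

open Set Filter MeasureTheory Metric Manifold Bundle
open scoped RealInnerProductSpace ContDiff ENNReal

noncomputable section

namespace MCFSoliton

/-! ## Riemannian volume and weighted volume growth -/

section Volume

variable {m : ℕ} {M : Type*} [MetricSpace M] [ChartedSpace (EuclideanSpace ℝ (Fin m)) M]
  [RiemannianBundle (fun x : M => TangentSpace (𝓡 m) x)]

/-- The coordinate vector field `∂/∂yⁱ` of the preferred chart at `p`, at the point of `M` with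
coordinates `y`. -/
def coordVector (p : M) (y : EuclideanSpace ℝ (Fin m)) (i : Fin m) :
    TangentSpace (𝓡 m) ((chartAt (EuclideanSpace ℝ (Fin m)) p).symm y) :=
  mfderiv 𝓘(ℝ, EuclideanSpace ℝ (Fin m)) (𝓡 m)
    (chartAt (EuclideanSpace ℝ (Fin m)) p).symm y (EuclideanSpace.single i (1 : ℝ))

/-- The matrix `g_{ij}(y) = ⟨∂_i, ∂_j⟩` of the Riemannian metric in the preferred chart at `p`. -/
def gramMatrix (p : M) (y : EuclideanSpace ℝ (Fin m)) : Matrix (Fin m) (Fin m) ℝ :=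
  Matrix.of fun i j => ⟪coordVector p y i, coordVector p y j⟫

/-- The Riemannian volume of the domain of the preferred chart at `p`: the measure that reads
`√(det g_{ij}) dy` in this chart, extended by zero outside the domain of the chart. -/
def chartVolume [MeasurableSpace M] (p : M) : Measure M :=
  (((volume : Measure (EuclideanSpace ℝ (Fin m))).withDensity
      fun y => ENNReal.ofReal (Real.sqrt (gramMatrix p y).det)).restrict
        (chartAt (EuclideanSpace ℝ (Fin m)) p).target).map
    (chartAt (EuclideanSpace ℝ (Fin m)) p).symm

variable (m M) in
/-- The Riemannian volume measure: the smallest measure on `M` that dominates all the measures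
`√(det g_{ij}) dy` of the charts. These agree on the overlaps, so on a second countable manifold
this is the unique Borel measure which reads `√(det g_{ij}) dy` in each chart. -/
def riemannianVolume [MeasurableSpace M] : Measure M :=
  ⨆ p : M, chartVolume (m := m) p

variable (m) in
/-- The weighted volume growth `c_0^w(M) = liminf_{R → +∞} log (∫_{B_R(o)} w) / R`, as an
extended real number. -/
def weightedGrowth [MeasurableSpace M] (w : M → ℝ) (o : M) : EReal :=
  liminf (fun R : ℝ =>
    ENNReal.log (∫⁻ x in ball o R, ENNReal.ofReal (w x) ∂(riemannianVolume m M)) / (R : EReal))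
    atTop

end Volume

/-! ## Hypersurfaces of `ℝ^{m+1}` -/

section Hypersurface

variable {m : ℕ} {M : Type*} [MetricSpace M] [ChartedSpace (EuclideanSpace ℝ (Fin m)) M]

/-- The differential at `x` of a map from `M` to `ℝ^{m+1}`. -/
def diff (f : M → EuclideanSpace ℝ (Fin (m + 1))) (x : M) :
    TangentSpace (𝓡 m) x →L[ℝ] EuclideanSpace ℝ (Fin (m + 1)) :=
  mfderiv (𝓡 m) 𝓘(ℝ, EuclideanSpace ℝ (Fin (m + 1))) f x

/-- `ν` is a spherical Gauss map of the immersion `ψ`: a smooth unit normal field along `ψ`.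
Such a field amounts to an orientation of the hypersurface. -/
structure IsGaussMap (ψ ν : M → EuclideanSpace ℝ (Fin (m + 1))) : Prop where
  contMDiff : ContMDiff (𝓡 m) 𝓘(ℝ, EuclideanSpace ℝ (Fin (m + 1))) ∞ ν
  norm_eq_one : ∀ x, ‖ν x‖ = 1
  normal : ∀ x (u : TangentSpace (𝓡 m) x), ⟪diff ψ x u, ν x⟫ = 0

/-- The second fundamental form of `ψ` in the direction of `ν`: `A(u, w) = -⟨dν(u), dψ(w)⟩`. -/
def secondFundForm (ψ ν : M → EuclideanSpace ℝ (Fin (m + 1))) (x : M)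
    (u w : TangentSpace (𝓡 m) x) : ℝ :=
  -⟪diff ν x u, diff ψ x w⟫

/-- The normal part of a vector `y` at `x`: its orthogonal projection to the orthogonal
complement of `dψ(T_x M)`. -/
def normalPart (ψ : M → EuclideanSpace ℝ (Fin (m + 1))) (x : M)
    (y : EuclideanSpace ℝ (Fin (m + 1))) : EuclideanSpace ℝ (Fin (m + 1)) :=
  ((diff ψ x).range)ᗮ.starProjection y

variable [RiemannianBundle (fun x : M => TangentSpace (𝓡 m) x)]

instance (x : M) : FiniteDimensional ℝ (TangentSpace (𝓡 m) x) :=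
  inferInstanceAs (FiniteDimensional ℝ (EuclideanSpace ℝ (Fin m)))

/-- `ψ` is a (smooth) isometric immersion: its differentials preserve the inner product. -/
structure IsIsometricImmersion (ψ : M → EuclideanSpace ℝ (Fin (m + 1))) : Prop where
  contMDiff : ContMDiff (𝓡 m) 𝓘(ℝ, EuclideanSpace ℝ (Fin (m + 1))) ∞ ψ
  inner_diff : ∀ x (u w : TangentSpace (𝓡 m) x), ⟪diff ψ x u, diff ψ x w⟫ = ⟪u, w⟫

/-- The norm `|A| = (∑_{i,j} A(e_i, e_j)²)^{1/2}` of the second fundamental form at `x`, for an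
orthonormal basis `e_i` of `T_x M`. -/
def normA (ψ ν : M → EuclideanSpace ℝ (Fin (m + 1))) (x : M) : ℝ :=
  Real.sqrt (∑ i, ∑ j,
    secondFundForm ψ ν x (stdOrthonormalBasis ℝ (TangentSpace (𝓡 m) x) i)
      (stdOrthonormalBasis ℝ (TangentSpace (𝓡 m) x) j) ^ 2)

/-- The mean curvature vector `𝐇 = (1/m) tr(A) ν`, with the trace taken in an orthonormal basis
of `T_x M`. -/
def meanCurvatureVector (ψ ν : M → EuclideanSpace ℝ (Fin (m + 1))) (x : M) :
    EuclideanSpace ℝ (Fin (m + 1)) :=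
  ((1 / (m : ℝ)) * ∑ i,
    secondFundForm ψ ν x (stdOrthonormalBasis ℝ (TangentSpace (𝓡 m) x) i)
      (stdOrthonormalBasis ℝ (TangentSpace (𝓡 m) x) i)) • ν x

/-- `ψ`, with Gauss map `ν`, is a mean curvature flow soliton with respect to the position vector
field, with soliton constant `c`: `m 𝐇 = c ψ^⊥`. -/
def IsSoliton (ψ ν : M → EuclideanSpace ℝ (Fin (m + 1))) (c : ℝ) : Prop :=
  ∀ x, (m : ℝ) • meanCurvatureVector ψ ν x = c • normalPart ψ x (ψ x)

end Hypersurface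

end MCFSoliton

end

/-!
Write `u = ⟪b, ν⟫` and `w = e^{c|ψ|²/2}`. The soliton equation and the Codazzi identity give the
weighted Jacobi equation `div (w ∇u) = -|A|² u w`. Since `u > 0`, the hypersurface is locally a
graph over the hyperplane orthogonal to `b`, and in horizontal coordinates the measure `u dvol` is
Lebesgue measure, so that the weak form of this equation is an integration by parts in `ℝᵐ` for the
vector field `w u⁻¹ ∇u`.

Test the equation with `φ² (1 - u)`, for a cutoff `φ` that is `1` on `B_R`, vanishes outside
`B_{R+δ}` and has slope `1/δ`. As `|A|² ≥ (1 - u) / u`, the arithmetic-geometric mean inequality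
leads to `δ² ∫_{B_R} (1 - u)² w ≤ ∫_{B_{R+δ}} (1 - u)² w`, so the energy `∫_{B_R} (1 - u)² w`
vanishes or grows at the exponential rate `2 log δ / δ` at least. The volume growth excludes the
latter for `δ = e`, hence `u = 1` and `ν = b`. Then `⟪b, ψ⟫` is a constant `a`, the projection of
`ψ` to the hyperplane is a local isometry defined on a complete manifold and therefore onto, and
the soliton equation reduces to `c a = 0`.
-/

noncomputable section

namespace MCFSoliton

open scoped Topology NNReal

section Divergence

variable {E F : Type*} [NormedAddCommGroup E] [NormedSpace ℝ E] [NormedAddCommGroup F]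
  [NormedSpace ℝ F]

theorem contDiff_smul_of_tsupport_subset {n : WithTop ℕ∞} {U : Set E} (hU : IsOpen U) {θ : E → ℝ}
    {X : E → F} (hθ : ContDiff ℝ n θ) (hθU : tsupport θ ⊆ U) (hX : ContDiffOn ℝ n X U) :
    ContDiff ℝ n fun y => θ y • X y := by
  rw [← contMDiff_iff_contDiff]
  refine contMDiff_of_tsupport fun y hy => ?_
  have hyU : y ∈ U := hθU (closure_mono (Function.support_smul_subset_left θ X) hy)
  exact (hθ.contDiffAt.smul (hX.contDiffAt (hU.mem_nhds hyU))).contMDiffAt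

theorem exists_contDiff_eqOn_one_of_isCompact [FiniteDimensional ℝ E] {K U : Set E}
    (hK : IsCompact K) (hU : IsOpen U) (hKU : K ⊆ U) :
    ∃ θ : E → ℝ, ContDiff ℝ ∞ θ ∧ HasCompactSupport θ ∧ tsupport θ ⊆ U ∧ EqOn θ 1 K := by
  obtain ⟨L, hL, hKL, hLU⟩ := exists_compact_between hK hU hKU
  obtain ⟨θ, hθ, -, hsupp, hone⟩ := exists_contMDiff_support_eq_eq_one_iff (n := ⊤) 𝓘(ℝ, E)
    isOpen_interior hK.isClosed hKL
  have hθL : tsupport θ ⊆ L := by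
    rw [tsupport, hsupp]
    exact closure_minimal interior_subset hL.isClosed
  exact ⟨θ, hθ.contDiff, hL.of_isClosed_subset (isClosed_tsupport θ) hθL, hθL.trans hLU,
    fun y hy => (hone y).1 hy⟩

/-- The divergence of a vector field on a normed space, as the trace of its derivative. -/
def divergence (X : E → E) (y : E) : ℝ :=
  LinearMap.trace ℝ E (fderiv ℝ X y)

theorem divergence_smul [FiniteDimensional ℝ E] {f : E → ℝ} {X : E → E} {y : E}
    (hf : DifferentiableAt ℝ f y) (hX : DifferentiableAt ℝ X y) :
    divergence (fun z => f z • X z) y = f y * divergence X y + fderiv ℝ f y (X y) := by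
  simp [divergence, fderiv_fun_smul hf hX, ContinuousLinearMap.coe_smulRight,
    LinearMap.trace_smulRight]

theorem fderiv_eq_zero_of_notMem_tsupport {g : E → F} {y : E} (hy : y ∉ tsupport g) :
    fderiv ℝ g y = 0 :=
  image_eq_zero_of_notMem_tsupport fun h => hy (tsupport_fderiv_subset ℝ h)

end Divergence

section DivergenceTheorem

variable {E : Type*} [NormedAddCommGroup E] [InnerProductSpace ℝ E]

theorem fderiv_apply_eq_neg_sum_lineDeriv {ι : Type*} [Fintype ι] (B : OrthonormalBasis ι ℝ E)
    {g : E → ℝ} {y : E} (hg : DifferentiableAt ℝ g y) (v : E) :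
    fderiv ℝ g y v = -∑ i, lineDeriv ℝ g y (-B i) * ⟪B i, v⟫ := by
  conv_lhs => rw [← B.sum_repr' v]
  simp [hg.lineDeriv_eq_fderiv, mul_comm]

theorem divergence_eq_sum_lineDeriv {ι : Type*} [Fintype ι] (B : OrthonormalBasis ι ℝ E)
    {X : E → E} {y : E} (hX : DifferentiableAt ℝ X y) :
    divergence X y = ∑ i, lineDeriv ℝ (fun z => ⟪B i, X z⟫) y (B i) := by
  rw [divergence, LinearMap.trace_eq_sum_inner _ B]
  refine Finset.sum_congr rfl fun i _ => ?_
  rw [((differentiableAt_const _).inner ℝ hX).lineDeriv_eq_fderiv,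
    fderiv_inner_apply ℝ (differentiableAt_const _) hX]
  simp

variable [FiniteDimensional ℝ E] [MeasurableSpace E] [BorelSpace E]

theorem integral_fderiv_apply_eq_neg_of_hasCompactSupport {X : E → E} (hX : ContDiff ℝ 1 X)
    (hXc : HasCompactSupport X) {g : E → ℝ} {C : ℝ≥0} (hg : LipschitzWith C g)
    (hgc : HasCompactSupport g) :
    Integrable (fun y => fderiv ℝ g y (X y)) ∧ Integrable (fun y => g y * divergence X y) ∧
      ∫ y, fderiv ℝ g y (X y) = -∫ y, g y * divergence X y := by
  let B := stdOrthonormalBasis ℝ E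
  have hXi (i) : ContDiff ℝ 1 fun y => ⟪B i, X y⟫ := contDiff_const.inner ℝ hX
  have hXic (i) : HasCompactSupport fun y => ⟪B i, X y⟫ :=
    hXc.comp_left (g := fun z => ⟪B i, z⟫) (inner_zero_right _)
  choose D hD using fun i => (hXi i).lipschitzWith_of_hasCompactSupport (hXic i) one_ne_zero
  have hint (i) : Integrable fun y => lineDeriv ℝ (fun z => ⟪B i, X z⟫) y (B i) * g y := by
    simpa only [smul_eq_mul] using ((hD i).locallyIntegrable_lineDeriv (μ := volume)
      (B i)).integrable_smul_right_of_hasCompactSupport hg.continuous hgc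
  have hint' (i) : Integrable fun y => lineDeriv ℝ g y (-B i) * ⟪B i, X y⟫ := by
    simpa only [smul_eq_mul] using (hg.locallyIntegrable_lineDeriv (μ := volume)
      (-B i)).integrable_smul_right_of_hasCompactSupport (hXi i).continuous (hXic i)
  have hfderiv : (fun y => fderiv ℝ g y (X y)) =ᵐ[volume]
      fun y => -∑ i, lineDeriv ℝ g y (-B i) * ⟪B i, X y⟫ := by
    filter_upwards [hg.ae_differentiableAt] with y hy
    exact fderiv_apply_eq_neg_sum_lineDeriv B hy _
  have hdiv : (fun y => g y * divergence X y) =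
      fun y => ∑ i, lineDeriv ℝ (fun z => ⟪B i, X z⟫) y (B i) * g y := by
    funext y
    rw [divergence_eq_sum_lineDeriv B (hX.differentiable one_ne_zero y), mul_comm, Finset.sum_mul]
  refine ⟨(integrable_finsetSum _ fun i _ => hint' i).neg.congr hfderiv.symm,
    hdiv ▸ integrable_finsetSum _ fun i _ => hint i, ?_⟩
  rw [integral_congr_ae hfderiv, hdiv, integral_neg, integral_finsetSum _ fun i _ => hint' i,
    integral_finsetSum _ fun i _ => hint i]
  simp only [LipschitzWith.integral_lineDeriv_mul_eq (hD _) hg hgc (B _)]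

theorem integral_fderiv_apply_eq_neg {U : Set E} (hU : IsOpen U) {X : E → E}
    (hX : ContDiffOn ℝ 1 X U) {g : E → ℝ} {C : ℝ≥0} (hg : LipschitzWith C g)
    (hgc : HasCompactSupport g) (hgU : tsupport g ⊆ U) :
    Integrable (fun y => fderiv ℝ g y (X y)) ∧ Integrable (fun y => g y * divergence X y) ∧
      ∫ y, fderiv ℝ g y (X y) = -∫ y, g y * divergence X y := by
  obtain ⟨θ, hθ, hθc, hθU, hθone⟩ := exists_contDiff_eqOn_one_of_isCompact hgc hU hgU
  have hYX : EqOn (fun z => θ z • X z) X (tsupport g) := fun y hy => by simp [hθone hy]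
  have hfderiv : (fun y => fderiv ℝ g y (θ y • X y)) = fun y => fderiv ℝ g y (X y) := by
    funext y
    by_cases hy : y ∈ tsupport g
    · exact congrArg _ (hYX hy)
    · simp [fderiv_eq_zero_of_notMem_tsupport hy]
  have hdiv : (fun y => g y * divergence (fun z => θ z • X z) y) =
      fun y => g y * divergence X y := by
    funext y
    by_cases hy : g y = 0
    · simp [hy]
    · have hev : (fun z => θ z • X z) =ᶠ[𝓝 y] X :=
        (hYX.mono (subset_tsupport g)).eventuallyEq_of_mem
          (hg.continuous.isOpen_support.mem_nhds hy)
      rw [divergence, hev.fderiv_eq, divergence]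
  simpa only [hfderiv, hdiv] using integral_fderiv_apply_eq_neg_of_hasCompactSupport
    (contDiff_smul_of_tsupport_subset hU (hθ.of_le (mod_cast le_top)) hθU hX) hθc.smul_right hg hgc

end DivergenceTheorem

section GaussWeight

variable {V : Type*} [NormedAddCommGroup V]

/-- The Gaussian weight `e^{c‖z‖²/2}` on the ambient space. -/
def gaussWeight (c : ℝ) (z : V) : ℝ :=
  Real.exp (c * (‖z‖ ^ 2 / 2))

theorem gaussWeight_pos (c : ℝ) (z : V) : 0 < gaussWeight c z :=
  Real.exp_pos _

variable [InnerProductSpace ℝ V]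

theorem contDiff_gaussWeight (c : ℝ) : ContDiff ℝ ∞ (gaussWeight c : V → ℝ) :=
  (contDiff_const.mul ((contDiff_norm_sq ℝ).div_const 2)).exp

theorem fderiv_gaussWeight (c : ℝ) (z v : V) :
    fderiv ℝ (gaussWeight c) z v = gaussWeight c z * (c * ⟪z, v⟫) := by
  have h : HasFDerivAt (gaussWeight c) _ z :=
    (((hasStrictFDerivAt_norm_sq z).hasFDerivAt.mul_const (2⁻¹ : ℝ)).const_mul c).exp
  rw [h.fderiv]
  simp [gaussWeight, div_eq_mul_inv]

end GaussWeight

section Graph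

variable {E V : Type*} [NormedAddCommGroup E] [InnerProductSpace ℝ E]
  [NormedAddCommGroup V] [InnerProductSpace ℝ V]

/-- `P` restricts to an isometry of the hyperplane orthogonal to the unit vector `b` into `E` and
kills `b`: it reads the coordinates of a vector orthogonal to `b`. -/
structure IsHorizontalProj (b : V) (P : V →L[ℝ] E) : Prop where
  norm_eq_one : ‖b‖ = 1
  inner_eq : ∀ v w, ⟪v, w⟫ = ⟪P v, P w⟫ + ⟪b, v⟫ * ⟪b, w⟫

namespace IsHorizontalProj

variable {b : V} {P : V →L[ℝ] E}

theorem norm_sq_eq (hP : IsHorizontalProj b P) (v : V) : ‖v‖ ^ 2 = ‖P v‖ ^ 2 + ⟪b, v⟫ ^ 2 := by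
  simpa only [real_inner_self_eq_norm_sq, ← sq] using hP.inner_eq v v

theorem apply_self (hP : IsHorizontalProj b P) : P b = 0 := by
  have h := hP.norm_sq_eq b
  rw [real_inner_self_eq_norm_sq, hP.norm_eq_one] at h
  simpa using h

theorem eq_zero (hP : IsHorizontalProj b P) {v : V} (hPv : P v = 0) (hbv : ⟪b, v⟫ = 0) :
    v = 0 := by
  simpa [hPv, hbv] using hP.norm_sq_eq v

theorem inner_eq_of_inner_eq_zero (hP : IsHorizontalProj b P) {v n : V} (hn : ⟪b, n⟫ ≠ 0)
    (hv : ⟪v, n⟫ = 0) : ⟪b, v⟫ = -⟪P v, P n⟫ / ⟪b, n⟫ := by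
  rw [eq_div_iff hn]
  linarith [hP.inner_eq v n]

theorem eq_zero_of_inner_eq_zero (hP : IsHorizontalProj b P) {v n : V} (hn : ⟪b, n⟫ ≠ 0)
    (hPv : P v = 0) (hv : ⟪v, n⟫ = 0) : v = 0 :=
  hP.eq_zero hPv (by simp [hP.inner_eq_of_inner_eq_zero hn hv, hPv])

end IsHorizontalProj

/-- The immersion `F` with unit normal `N`, read in the coordinates `P` of the hyperplane orthogonal
to `b`, parametrizes a graph over the open set `U` of that hyperplane. -/
structure IsGraphParam (b : V) (P : V →L[ℝ] E) (U : Set E) (F N : E → V) : Prop where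
  isHorizontalProj : IsHorizontalProj b P
  isOpen : IsOpen U
  contDiffOn : ContDiffOn ℝ ∞ F U
  contDiffOn_normal : ContDiffOn ℝ ∞ N U
  proj : ∀ y ∈ U, P (F y) = y
  norm_eq_one : ∀ y ∈ U, ‖N y‖ = 1
  normal : ∀ y ∈ U, ∀ v, ⟪fderiv ℝ F y v, N y⟫ = 0
  pos : ∀ y ∈ U, 0 < ⟪b, N y⟫

/-- The operator `v ↦ P (dN v)`: the differential of the Gauss map of a graph in horizontal
coordinates, that is, minus the shape operator. -/
def gaussOp (P : V →L[ℝ] E) (N : E → V) (y : E) : E →L[ℝ] E :=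
  P.comp (fderiv ℝ N y)

/-- The tangent vector field `u⁻¹ ∇u`, where `u = ⟪b, N⟫`, of a graph in horizontal coordinates. The
vector `b` enters through `P`: the tangential part of `b` has coordinates `-u P N`. -/
def gradField (P : V →L[ℝ] E) (N : E → V) (y : E) : E :=
  -gaussOp P N y (P (N y))

theorem divergence_gradField [FiniteDimensional ℝ E] (P : V →L[ℝ] E) {N : E → V} {y : E}
    (hN : ContDiffAt ℝ 2 N y) :
    divergence (gradField P N) y = -LinearMap.trace ℝ E (gaussOp P N y ∘L gaussOp P N y : E →L[ℝ] E)
      - fderiv ℝ (fun z => LinearMap.trace ℝ E (gaussOp P N z)) y (P (N y)) := by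
  let tr : (E →L[ℝ] E) →L[ℝ] ℝ :=
    LinearMap.toContinuousLinearMap (LinearMap.trace ℝ E ∘ₗ ContinuousLinearMap.coeLM ℝ)
  have hNy : HasFDerivAt N (fderiv ℝ N y) y := (hN.differentiableAt two_ne_zero).hasFDerivAt
  have hS : HasFDerivAt (gaussOp P N) (ContinuousLinearMap.compL ℝ E V E P ∘L
      fderiv ℝ (fderiv ℝ N) y) y :=
    (ContinuousLinearMap.compL ℝ E V E P).hasFDerivAt.comp y
      ((hN.fderiv_right (m := 1) le_rfl).differentiableAt one_ne_zero).hasFDerivAt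
  have htr : HasFDerivAt (fun z => LinearMap.trace ℝ E (gaussOp P N z)) _ y :=
    tr.hasFDerivAt.comp y hS
  have hX : HasFDerivAt (gradField P N) _ y := (hS.clm_apply (P.hasFDerivAt.comp y hNy)).neg
  have hsymm (v w : E) : fderiv ℝ (fderiv ℝ N) y v w = fderiv ℝ (fderiv ℝ N) y w v :=
    (hN.isSymmSndFDerivAt minSmoothness_of_isRCLikeNormedField.le).eq v w
  rw [divergence, hX.fderiv, htr.fderiv]
  trans LinearMap.trace ℝ E (-(gaussOp P N y ∘L gaussOp P N y) -
    P ∘L fderiv ℝ (fderiv ℝ N) y (P (N y)) : E →L[ℝ] E)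
  · congr 2
    ext v
    simp [gaussOp, hsymm v, sub_eq_add_neg, add_comm]
  · simp [tr]

namespace IsGraphParam

variable {b : V} {P : V →L[ℝ] E} {U : Set E} {F N : E → V} {y : E}

theorem contDiffAt (h : IsGraphParam b P U F N) (hy : y ∈ U) : ContDiffAt ℝ ∞ F y :=
  h.contDiffOn.contDiffAt (h.isOpen.mem_nhds hy)

theorem contDiffAt_normal (h : IsGraphParam b P U F N) (hy : y ∈ U) : ContDiffAt ℝ ∞ N y :=
  h.contDiffOn_normal.contDiffAt (h.isOpen.mem_nhds hy)

theorem hasFDerivAt (h : IsGraphParam b P U F N) (hy : y ∈ U) :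
    HasFDerivAt F (fderiv ℝ F y) y :=
  ((h.contDiffAt hy).differentiableAt (by simp)).hasFDerivAt

theorem hasFDerivAt_normal (h : IsGraphParam b P U F N) (hy : y ∈ U) :
    HasFDerivAt N (fderiv ℝ N y) y :=
  ((h.contDiffAt_normal hy).differentiableAt (by simp)).hasFDerivAt

theorem contDiffOn_gradField (h : IsGraphParam b P U F N) : ContDiffOn ℝ ∞ (gradField P N) U := by
  intro y hy
  have hN := h.contDiffAt_normal hy
  exact (P.contDiff.contDiffAt.comp y ((hN.fderiv_right (by simp)).clm_apply
    (P.contDiff.contDiffAt.comp y hN))).neg.contDiffWithinAt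

theorem proj_fderiv (h : IsGraphParam b P U F N) (hy : y ∈ U) (v : E) :
    P (fderiv ℝ F y v) = v := by
  have hPF : (fun z => P (F z)) =ᶠ[𝓝 y] id := by
    filter_upwards [h.isOpen.mem_nhds hy] with z hz using h.proj z hz
  exact DFunLike.congr_fun ((P.hasFDerivAt.comp y (h.hasFDerivAt hy)).unique
    ((hasFDerivAt_id y).congr_of_eventuallyEq hPF)) v

theorem inner_fderiv_normal (h : IsGraphParam b P U F N) (hy : y ∈ U) (v : E) :
    ⟪fderiv ℝ N y v, N y⟫ = 0 := by
  have hNN : (fun z => ‖N z‖ ^ 2) =ᶠ[𝓝 y] fun _ => 1 := by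
    filter_upwards [h.isOpen.mem_nhds hy] with z hz
    rw [h.norm_eq_one z hz, one_pow]
  have hderiv := DFunLike.congr_fun ((h.hasFDerivAt_normal hy).norm_sq.unique
    ((hasFDerivAt_const (1 : ℝ) y).congr_of_eventuallyEq hNN)) v
  simpa [real_inner_comm] using hderiv

theorem fderiv_proj (h : IsGraphParam b P U F N) (hy : y ∈ U) {z : V} (hz : ⟪z, N y⟫ = 0) :
    fderiv ℝ F y (P z) = z := by
  refine sub_eq_zero.1 (h.isHorizontalProj.eq_zero_of_inner_eq_zero (h.pos y hy).ne' ?_ ?_)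
  · rw [map_sub, h.proj_fderiv hy, sub_self]
  · rw [inner_sub_left, h.normal y hy, hz, sub_zero]

theorem inner_fderiv_fderiv_normal (h : IsGraphParam b P U F N) (hy : y ∈ U) (v w : E) :
    ⟪fderiv ℝ N y v, fderiv ℝ F y w⟫ = -⟪fderiv ℝ (fderiv ℝ F) y v w, N y⟫ := by
  have hDF : HasFDerivAt (fderiv ℝ F) (fderiv ℝ (fderiv ℝ F) y) y :=
    (((h.contDiffAt hy).fderiv_right (m := ∞) (by simp)).differentiableAt (by simp)).hasFDerivAt
  have hFN : (fun z => ⟪fderiv ℝ F z w, N z⟫) =ᶠ[𝓝 y] fun _ => 0 := by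
    filter_upwards [h.isOpen.mem_nhds hy] with z hz using h.normal z hz w
  have hderiv := DFunLike.congr_fun (((hDF.clm_apply (hasFDerivAt_const w y)).inner ℝ
    (h.hasFDerivAt_normal hy)).unique ((hasFDerivAt_const (0 : ℝ) y).congr_of_eventuallyEq hFN)) v
  have hsum : ⟪fderiv ℝ F y w, fderiv ℝ N y v⟫ + ⟪fderiv ℝ (fderiv ℝ F) y v w, N y⟫ = 0 := by
    simpa [fderivInnerCLM_apply] using hderiv
  rw [real_inner_comm]
  linarith

theorem inner_fderiv_normal_comm (h : IsGraphParam b P U F N) (hy : y ∈ U) (v w : E) :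
    ⟪fderiv ℝ N y v, fderiv ℝ F y w⟫ = ⟪fderiv ℝ N y w, fderiv ℝ F y v⟫ := by
  have hsymm : IsSymmSndFDerivAt ℝ F y := (h.contDiffAt hy).isSymmSndFDerivAt (by
    rw [minSmoothness_of_isRCLikeNormedField]
    exact ENat.LEInfty.out)
  rw [h.inner_fderiv_fderiv_normal hy, h.inner_fderiv_fderiv_normal hy, hsymm.eq v w]

theorem fderiv_gradField (h : IsGraphParam b P U F N) (hy : y ∈ U) :
    fderiv ℝ F y (gradField P N y) = -fderiv ℝ N y (P (N y)) := by
  rw [gradField, map_neg, gaussOp, ContinuousLinearMap.comp_apply,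
    h.fderiv_proj hy (h.inner_fderiv_normal hy _)]

theorem inner_fderiv_eq (h : IsGraphParam b P U F N) (hy : y ∈ U) (v : E) :
    ⟪b, fderiv ℝ F y v⟫ = -⟪b, N y⟫ * ⟪fderiv ℝ F y v, fderiv ℝ F y (P (N y))⟫ := by
  have htan : ⟪b - ⟪b, N y⟫ • N y, N y⟫ = 0 := by
    simp [inner_sub_left, real_inner_smul_left, h.norm_eq_one y hy]
  have hb : b - ⟪b, N y⟫ • N y = -⟪b, N y⟫ • fderiv ℝ F y (P (N y)) := by
    rw [← h.fderiv_proj hy htan]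
    simp [h.isHorizontalProj.apply_self]
  calc ⟪b, fderiv ℝ F y v⟫ = ⟪fderiv ℝ F y v, b - ⟪b, N y⟫ • N y⟫ := by
        rw [inner_sub_right, real_inner_smul_right, h.normal y hy, real_inner_comm]
        ring
    _ = _ := by rw [hb, real_inner_smul_right]

theorem inner_fderiv_normal_eq (h : IsGraphParam b P U F N) (hy : y ∈ U) (v : E) :
    ⟪b, fderiv ℝ N y v⟫ = ⟪b, N y⟫ * ⟪fderiv ℝ F y (gradField P N y), fderiv ℝ F y v⟫ := by
  have htan := h.fderiv_proj hy (h.inner_fderiv_normal hy v)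
  calc ⟪b, fderiv ℝ N y v⟫ = -⟪b, N y⟫ * ⟪fderiv ℝ N y v, fderiv ℝ F y (P (N y))⟫ := by
        rw [← htan, h.inner_fderiv_eq hy, htan]
    _ = -⟪b, N y⟫ * ⟪fderiv ℝ N y (P (N y)), fderiv ℝ F y v⟫ := by
        rw [h.inner_fderiv_normal_comm hy]
    _ = _ := by
        rw [h.fderiv_gradField hy]
        simp

theorem contDiffOn_gaussWeight_smul_gradField (h : IsGraphParam b P U F N) (c : ℝ) :
    ContDiffOn ℝ ∞ (fun z => gaussWeight c (F z) • gradField P N z) U :=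
  ((contDiff_gaussWeight c).comp_contDiffOn h.contDiffOn).smul h.contDiffOn_gradField

theorem fderiv_trace_gaussOp (h : IsGraphParam b P U F N) {c : ℝ}
    (hc : ∀ y ∈ U, LinearMap.trace ℝ E (gaussOp P N y) = -(c * ⟪F y, N y⟫)) (hy : y ∈ U) :
    fderiv ℝ (fun z => LinearMap.trace ℝ E (gaussOp P N z)) y (P (N y)) =
      c * ⟪F y, fderiv ℝ F y (gradField P N y)⟫ := by
  have heq : (fun z => LinearMap.trace ℝ E (gaussOp P N z)) =ᶠ[𝓝 y]
      fun z => -(c * ⟪F z, N z⟫) := by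
    filter_upwards [h.isOpen.mem_nhds hy] with z hz using hc z hz
  have hderiv : HasFDerivAt (fun z => -(c * ⟪F z, N z⟫)) _ y :=
    (((h.hasFDerivAt hy).inner ℝ (h.hasFDerivAt_normal hy)).const_mul c).neg
  rw [heq.fderiv_eq, hderiv.fderiv, h.fderiv_gradField hy]
  simp [fderivInnerCLM_apply, h.normal y hy]

theorem divergence_gaussWeight_smul_gradField [FiniteDimensional ℝ E]
    (h : IsGraphParam b P U F N) {c : ℝ}
    (hc : ∀ y ∈ U, LinearMap.trace ℝ E (gaussOp P N y) = -(c * ⟪F y, N y⟫)) (hy : y ∈ U) :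
    divergence (fun z => gaussWeight c (F z) • gradField P N z) y =
      -(gaussWeight c (F y) *
        LinearMap.trace ℝ E (gaussOp P N y ∘L gaussOp P N y : E →L[ℝ] E)) := by
  have hw : HasFDerivAt (fun z => gaussWeight c (F z)) _ y :=
    ((contDiff_gaussWeight c).differentiable (by simp) (F y)).hasFDerivAt.comp y (h.hasFDerivAt hy)
  have hX : DifferentiableAt ℝ (gradField P N) y :=
    (h.contDiffOn_gradField.contDiffAt (h.isOpen.mem_nhds hy)).differentiableAt (by simp)
  rw [divergence_smul hw.differentiableAt hX, hw.fderiv, ContinuousLinearMap.comp_apply,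
    fderiv_gaussWeight, divergence_gradField P ((h.contDiffAt_normal hy).of_le ENat.LEInfty.out),
    h.fderiv_trace_gaussOp hc hy]
  ring

end IsGraphParam

end Graph

section HorizontalProj

open Matrix

variable {V : Type*} [NormedAddCommGroup V] [InnerProductSpace ℝ V] {b : V}

theorem exists_isHorizontalProj {m : ℕ}
    (hV : Module.finrank ℝ V = m + 1) (hb : ‖b‖ = 1) :
    ∃ P : V →L[ℝ] EuclideanSpace ℝ (Fin m), IsHorizontalProj b P := by
  have : Fact (Module.finrank ℝ V = m + 1) := ⟨hV⟩
  let B : OrthonormalBasis (Fin m) ℝ (ℝ ∙ b)ᗮ :=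
    OrthonormalBasis.fromOrthogonalSpanSingleton m (norm_ne_zero_iff.1 (by simp [hb]))
  refine ⟨(B.repr.toContinuousLinearEquiv : (ℝ ∙ b)ᗮ →L[ℝ] EuclideanSpace ℝ (Fin m)) ∘L
    (ℝ ∙ b)ᗮ.orthogonalProjectionOnto, hb, fun v w => ?_⟩
  have hproj (z : V) : ((ℝ ∙ b)ᗮ.orthogonalProjectionOnto z : V) = z - ⟪b, z⟫ • b := by
    rw [Submodule.coe_orthogonalProjectionOnto_apply, Submodule.starProjection_orthogonal_val,
      Submodule.starProjection_unit_singleton ℝ hb]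
  change ⟪v, w⟫ = ⟪B.repr ((ℝ ∙ b)ᗮ.orthogonalProjectionOnto v),
    B.repr ((ℝ ∙ b)ᗮ.orthogonalProjectionOnto w)⟫ + _
  rw [B.repr.inner_map_map, Submodule.coe_inner, hproj, hproj]
  simp only [inner_sub_left, inner_sub_right, real_inner_smul_left, real_inner_smul_right,
    real_inner_self_eq_norm_sq, hb, real_inner_comm b v]
  ring

namespace IsHorizontalProj

variable {E ι : Type*} [NormedAddCommGroup E] [InnerProductSpace ℝ E] [Fintype ι]
  [DecidableEq ι]
  {P : V →L[ℝ] E} {n : V}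

theorem det_one_add_vecMulVec_eq (hP : IsHorizontalProj b P) (e : OrthonormalBasis ι ℝ E)
    (hn : ‖n‖ = 1) (hbn : ⟪b, n⟫ ≠ 0) :
    (1 + vecMulVec (fun i => ⟪e i, P n⟫ / ⟪b, n⟫) fun i => ⟪e i, P n⟫ / ⟪b, n⟫).det =
      1 / ⟪b, n⟫ ^ 2 := by
  rw [vecMulVec_eq Unit, det_one_add_replicateCol_mul_replicateRow]
  have hsum : (fun i => ⟪e i, P n⟫ / ⟪b, n⟫) ⬝ᵥ (fun i => ⟪e i, P n⟫ / ⟪b, n⟫) =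
      ‖P n‖ ^ 2 / ⟪b, n⟫ ^ 2 := by
    rw [← e.sum_sq_inner_right, Finset.sum_div, dotProduct]
    exact Finset.sum_congr rfl fun i _ => by ring
  rw [hsum, eq_div_iff (pow_ne_zero 2 hbn), add_mul, div_mul_cancel₀ _ (pow_ne_zero 2 hbn)]
  linarith [hn ▸ hP.norm_sq_eq n]

variable [FiniteDimensional ℝ E]

theorem gram_eq (hP : IsHorizontalProj b P) (e : OrthonormalBasis ι ℝ E) (D : E →L[ℝ] V)
    (hn : ⟪b, n⟫ ≠ 0) (hD : ∀ v, ⟪D v, n⟫ = 0) :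
    gram ℝ (fun i => D (e i)) = (LinearMap.toMatrixOrthonormal e (P ∘L D))ᵀ *
      (1 + vecMulVec (fun i => ⟪e i, P n⟫ / ⟪b, n⟫) fun i => ⟪e i, P n⟫ / ⟪b, n⟫) *
        LinearMap.toMatrixOrthonormal e (P ∘L D) := by
  set A := LinearMap.toMatrixOrthonormal e (P ∘L D)
  set k : ι → ℝ := fun i => ⟪e i, P n⟫ / ⟪b, n⟫
  have hA (i j) : A i j = ⟪e i, P (D (e j))⟫ := LinearMap.toMatrixOrthonormal_apply_apply ..
  have hgram (i j) : (Aᵀ * A) i j = ⟪P (D (e i)), P (D (e j))⟫ := by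
    rw [mul_apply, ← e.sum_inner_mul_inner]
    exact Finset.sum_congr rfl fun l _ => by
      rw [transpose_apply, hA, hA, real_inner_comm (e l) (P (D (e i)))]
  have hk (i) : (k ᵥ* A) i = -⟪b, D (e i)⟫ := by
    rw [hP.inner_eq_of_inner_eq_zero hn (hD _), neg_div, neg_neg,
      ← e.sum_inner_mul_inner, Finset.sum_div]
    refine Finset.sum_congr rfl fun j _ => ?_
    change ⟪e j, P n⟫ / ⟪b, n⟫ * A j i = _
    rw [hA, real_inner_comm (e j) (P (D (e i)))]
    ring
  have hrank (i j) : (Aᵀ * vecMulVec k k * A) i j = ⟪b, D (e i)⟫ * ⟪b, D (e j)⟫ := by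
    rw [mul_vecMulVec, vecMulVec_mul, mulVec_transpose, vecMulVec_apply, hk, hk, neg_mul_neg]
  ext i j
  rw [Matrix.mul_add, Matrix.add_mul, Matrix.mul_one, Matrix.add_apply, hgram, hrank, gram_apply,
    hP.inner_eq]

theorem sqrt_det_gram_mul (hP : IsHorizontalProj b P) (e : OrthonormalBasis ι ℝ E)
    (D : E →L[ℝ] V) (hn : ‖n‖ = 1) (hD : ∀ v, ⟪D v, n⟫ = 0) (hbn : 0 < ⟪b, n⟫) :
    √(gram ℝ fun i => D (e i)).det * ⟪b, n⟫ = |(P ∘L D).det| := by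
  have hdet : (LinearMap.toMatrixOrthonormal e (P ∘L D)).det = (P ∘L D).det :=
    LinearMap.det_toMatrix e.toBasis _
  rw [hP.gram_eq e D hbn.ne' hD, det_mul, det_mul, det_transpose, hdet,
    hP.det_one_add_vecMulVec_eq e hn hbn.ne']
  have hsq : (P ∘L D).det * (1 / ⟪b, n⟫ ^ 2) * (P ∘L D).det = ((P ∘L D).det / ⟪b, n⟫) ^ 2 := by
    ring
  rw [hsq, Real.sqrt_sq_eq_abs, abs_div, abs_of_pos hbn, div_mul_cancel₀ _ hbn.ne']

end IsHorizontalProj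

end HorizontalProj

section LengthMetric

/-- Approximate intermediate points: a point at distance `r < dist x y` from `x`, up to an error `δ`
on the segment from `x` to `y`. Among complete metric spaces this characterizes length spaces. -/
def IsLengthMetric (X : Type*) [PseudoMetricSpace X] : Prop :=
  ∀ ⦃x y : X⦄ ⦃r δ : ℝ⦄, 0 ≤ r → r < dist x y → 0 < δ →
    ∃ z, dist x z ≤ r ∧ dist z y ≤ dist x y - r + δ

variable {X : Type*} [PseudoMetricSpace X] {o : X}

theorem IsLengthMetric.closedBall_subset_thickening (hX : IsLengthMetric X) {r δ : ℝ}
    (hr : 0 ≤ r) (hδ : 0 < δ) : closedBall o (r + δ) ⊆ thickening (2 * δ) (closedBall o r) := by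
  intro x hx
  rw [mem_thickening_iff]
  rcases le_or_gt (dist o x) r with hxr | hxr
  · exact ⟨x, by rwa [mem_closedBall'], by rw [dist_self]; positivity⟩
  · obtain ⟨z, hoz, hzx⟩ := hX hr hxr (half_pos hδ)
    rw [mem_closedBall'] at hx
    exact ⟨z, by rwa [mem_closedBall'], by rw [dist_comm]; linarith⟩

theorem totallyBounded_of_forall_subset_thickening {s : Set X}
    (h : ∀ ε > 0, ∃ t, TotallyBounded t ∧ s ⊆ thickening ε t) : TotallyBounded s := by
  refine Metric.totallyBounded_iff.2 fun ε hε => ?_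
  obtain ⟨t, ht, hst⟩ := h (ε / 2) (half_pos hε)
  obtain ⟨f, hf, htf⟩ := Metric.totallyBounded_iff.1 ht (ε / 2) (half_pos hε)
  refine ⟨f, hf, fun x hx => ?_⟩
  obtain ⟨z, hzt, hxz⟩ := mem_thickening_iff.1 (hst hx)
  obtain ⟨y, hyf, hzy⟩ := mem_iUnion₂.1 (htf hzt)
  exact mem_iUnion₂.2 ⟨y, hyf, (dist_triangle x z y).trans_lt (by linarith [mem_ball.1 hzy])⟩

theorem IsLengthMetric.isCompact_closedBall_of_lt [CompleteSpace X] (hX : IsLengthMetric X)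
    {R : ℝ} (hR : 0 < R) (hlt : ∀ r < R, IsCompact (closedBall o r)) :
    IsCompact (closedBall o R) := by
  refine isCompact_iff_totallyBounded_isComplete.2
    ⟨totallyBounded_of_forall_subset_thickening fun ε hε => ?_, isClosed_closedBall.isComplete⟩
  obtain ⟨δ, hδ, hδε⟩ := exists_between (lt_min hR (half_pos hε))
  rw [lt_min_iff] at hδε
  have hsub := hX.closedBall_subset_thickening (o := o) (sub_nonneg.2 hδε.1.le) hδ
  rw [sub_add_cancel] at hsub
  exact ⟨closedBall o (R - δ), (hlt _ (by linarith)).totallyBounded,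
    hsub.trans (thickening_mono (by linarith) _)⟩

theorem IsLengthMetric.exists_isCompact_closedBall_add [LocallyCompactSpace X]
    (hX : IsLengthMetric X) {R : ℝ} (hR : 0 ≤ R) (hcomp : IsCompact (closedBall o R)) :
    ∃ δ > 0, IsCompact (closedBall o (R + δ)) := by
  obtain ⟨δ, hδ, hδcomp⟩ := hcomp.exists_isCompact_cthickening
  refine ⟨δ / 2, half_pos hδ, hδcomp.of_isClosed_subset isClosed_closedBall ?_⟩
  have hsub := hX.closedBall_subset_thickening (o := o) hR (half_pos hδ)
  rw [mul_div_cancel₀ _ two_ne_zero] at hsub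
  exact hsub.trans (thickening_subset_cthickening _ _)

-- Hopf–Rinow–Cohn-Vossen: the set of radii with compact closed ball is open and closed.
theorem IsLengthMetric.properSpace [CompleteSpace X] [LocallyCompactSpace X]
    (hX : IsLengthMetric X) : ProperSpace X := by
  refine ⟨fun o => ?_⟩
  set S : Set ℝ := {r | IsCompact (closedBall o r)}
  have hdown {r s : ℝ} (hs : s ∈ S) (hrs : r ≤ s) : r ∈ S :=
    IsCompact.of_isClosed_subset hs isClosed_closedBall (closedBall_subset_closedBall hrs)
  obtain ⟨ρ, hρ, hρS⟩ : ∃ ρ > 0, ρ ∈ S := by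
    obtain ⟨K, hK, hoK⟩ := exists_compact_mem_nhds o
    obtain ⟨ρ, hρ, hsub⟩ := Metric.nhds_basis_closedBall.mem_iff.1 hoK
    exact ⟨ρ, hρ, hK.of_isClosed_subset isClosed_closedBall hsub⟩
  by_contra! hS
  obtain ⟨r₀, hr₀⟩ := hS
  have hbdd : BddAbove S := ⟨r₀, fun r hr => not_lt.1 fun h => hr₀ (hdown hr h.le)⟩
  have hpos : 0 < sSup S := hρ.trans_le (le_csSup hbdd hρS)
  have hmem : IsCompact (closedBall o (sSup S)) := hX.isCompact_closedBall_of_lt hpos fun r hr => by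
    obtain ⟨s, hs, hrs⟩ := exists_lt_of_lt_csSup ⟨ρ, hρS⟩ hr
    exact hdown hs hrs.le
  obtain ⟨δ, hδ, hδS⟩ := hX.exists_isCompact_closedBall_add hpos.le hmem
  linarith [le_csSup hbdd hδS]

end LengthMetric

section Growth

variable {J : ℝ → ℝ} {h q R : ℝ}

theorem pow_mul_le_of_forall_mul_le (hq : 0 ≤ q) (hstep : ∀ r, q * J r ≤ J (r + h)) (k : ℕ) :
    q ^ k * J R ≤ J (R + k * h) := by
  induction k with
  | zero => simp
  | succ k ih =>
    calc q ^ (k + 1) * J R = q * (q ^ k * J R) := by ring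
      _ ≤ q * J (R + k * h) := by gcongr
      _ ≤ J (R + k * h + h) := hstep _
      _ = J (R + (k + 1 : ℕ) * h) := by push_cast; ring_nf

theorem exists_forall_mul_exp_le (hmono : Monotone J) (hh : 0 < h) (hq : 1 ≤ q)
    (hstep : ∀ r, q * J r ≤ J (r + h)) (hR : 0 < J R) :
    ∃ C > 0, ∀ r ≥ R, C * Real.exp (r * (Real.log q / h)) ≤ J r := by
  have hq0 : 0 < q := one_pos.trans_le hq
  have hL : 0 ≤ Real.log q / h := div_nonneg (Real.log_nonneg hq) hh.le
  refine ⟨J R * Real.exp (-(R + h) * (Real.log q / h)), by positivity, fun r hr => ?_⟩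
  set k := ⌊(r - R) / h⌋₊
  have hk : r - R ≤ (k + 1) * h := (div_le_iff₀ hh).1 (Nat.lt_floor_add_one _).le
  have hkr : k * h ≤ r - R :=
    (le_div_iff₀ hh).1 (Nat.floor_le (div_nonneg (sub_nonneg.2 hr) hh.le))
  have hpow : q ^ k = Real.exp (k * h * (Real.log q / h)) := by
    rw [mul_assoc, mul_div_cancel₀ _ hh.ne', Real.exp_nat_mul, Real.exp_log hq0]
  calc J R * Real.exp (-(R + h) * (Real.log q / h)) * Real.exp (r * (Real.log q / h))
      = Real.exp ((r - R - h) * (Real.log q / h)) * J R := by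
        rw [mul_assoc, ← Real.exp_add, mul_comm]
        ring_nf
    _ ≤ q ^ k * J R := by
        rw [hpow]
        gcongr
        linarith
    _ ≤ J (R + k * h) := pow_mul_le_of_forall_mul_le hq0.le hstep k
    _ ≤ J r := hmono (by linarith)

theorem log_div_le_liminf_log_div (hmono : Monotone J) (hh : 0 < h) (hq : 1 ≤ q)
    (hstep : ∀ r, q * J r ≤ J (r + h)) (hR : 0 < J R) {W : ℝ → ℝ≥0∞}
    (hJW : ∀ r, ENNReal.ofReal (J r) ≤ W r) :
    ((Real.log q / h : ℝ) : EReal) ≤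
      liminf (fun r : ℝ => ENNReal.log (W r) / (r : EReal)) atTop := by
  obtain ⟨C, hC, hCJ⟩ := exists_forall_mul_exp_le hmono hh hq hstep hR
  have hlim : Tendsto (fun r : ℝ => ((Real.log C / r + Real.log q / h : ℝ) : EReal)) atTop
      (𝓝 (Real.log q / h : ℝ)) := by
    refine (continuous_coe_real_ereal.tendsto _).comp ?_
    simpa using (tendsto_const_nhds.div_atTop tendsto_id).add_const (Real.log q / h)
  rw [← hlim.liminf_eq]
  refine liminf_le_liminf ?_
  filter_upwards [eventually_ge_atTop R, eventually_gt_atTop 0] with r hrR hr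
  have hlog : ((Real.log C + r * (Real.log q / h) : ℝ) : EReal) ≤ ENNReal.log (W r) := by
    have hle := ENNReal.log_le_log ((ENNReal.ofReal_le_ofReal (hCJ r hrR)).trans (hJW r))
    rwa [ENNReal.log_ofReal_of_pos (by positivity), Real.log_mul hC.ne' (Real.exp_pos _).ne',
      Real.log_exp] at hle
  calc ((Real.log C / r + Real.log q / h : ℝ) : EReal)
      = ((Real.log C + r * (Real.log q / h) : ℝ) : EReal) / (r : EReal) := by
        rw [← EReal.coe_div, add_div, mul_div_cancel_left₀ _ hr.ne']
    _ ≤ ENNReal.log (W r) / (r : EReal) := EReal.div_le_div_right_of_nonneg (mod_cast hr.le) hlog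

end Growth

section InverseFunction

variable {E W : Type*} [NormedAddCommGroup E] [NormedSpace ℝ E] [NormedAddCommGroup W]
  [NormedSpace ℝ W]

theorem exists_openPartialHomeomorph_of_injective_fderiv [FiniteDimensional ℝ E] {G : E → E}
    {U : Set E} (hU : IsOpen U) (hG : ContDiffOn ℝ ∞ G U)
    (hinj : ∀ y ∈ U, Function.Injective (fderiv ℝ G y)) {x : E} (hx : x ∈ U) :
    ∃ g : OpenPartialHomeomorph E E, x ∈ g.source ∧ g.source ⊆ U ∧ ⇑g = G ∧
      ContDiffOn ℝ ∞ g.symm g.target := by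
  have : CompleteSpace E := FiniteDimensional.complete ℝ E
  have hG' (y) (hy : y ∈ U) : ContDiffAt ℝ ∞ G y := hG.contDiffAt (hU.mem_nhds hy)
  have hequiv (y) (hy : y ∈ U) : ∃ L : E ≃L[ℝ] E, HasFDerivAt G (L : E →L[ℝ] E) y :=
    ⟨(LinearEquiv.ofInjectiveEndo (fderiv ℝ G y : E →ₗ[ℝ] E) (hinj y hy)).toContinuousLinearEquiv,
      ((hG' y hy).differentiableAt (by simp)).hasFDerivAt.congr_fderiv (by ext; rfl)⟩
  obtain ⟨L, hL⟩ := hequiv x hx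
  let g := ((hG' x hx).toOpenPartialHomeomorph G hL (by simp)).restrOpen U hU
  have hgU : g.source ⊆ U := fun y hy => hy.2
  refine ⟨g, ⟨(hG' x hx).mem_toOpenPartialHomeomorph_source hL (by simp), hx⟩, hgU, rfl,
    fun z hz => ?_⟩
  have hzU : g.symm z ∈ U := hgU (g.map_target hz)
  obtain ⟨L', hL'⟩ := hequiv _ hzU
  exact (g.contDiffAt_symm hz hL' (hG' _ hzU)).contDiffWithinAt

variable {M : Type*} [TopologicalSpace M] [ChartedSpace E M]

theorem fderiv_comp_apply_eq_mfderiv {E' : Type*} [NormedAddCommGroup E'] [NormedSpace ℝ E']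
    {f : M → W} {g : E' → M} {y : E'} (hf : MDifferentiableAt 𝓘(ℝ, E) 𝓘(ℝ, W) f (g y))
    (hg : MDifferentiableAt 𝓘(ℝ, E') 𝓘(ℝ, E) g y) (v : E') :
    fderiv ℝ (fun z => f (g z)) y v =
      mfderiv 𝓘(ℝ, E) 𝓘(ℝ, W) f (g y) (mfderiv 𝓘(ℝ, E') 𝓘(ℝ, E) g y v) := by
  rw [← mfderiv_eq_fderiv]
  exact mfderiv_comp_apply y hf hg v

theorem exists_openPartialHomeomorph_of_injective_mfderiv [FiniteDimensional ℝ E]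
    [IsManifold 𝓘(ℝ, E) ∞ M] {f : M → E} (hf : ContMDiff 𝓘(ℝ, E) 𝓘(ℝ, E) ∞ f)
    (hinj : ∀ x, Function.Injective (mfderiv 𝓘(ℝ, E) 𝓘(ℝ, E) f x)) (x : M) :
    ∃ e : OpenPartialHomeomorph M E, x ∈ e.source ∧ e.source ⊆ (chartAt E x).source ∧
      EqOn e f e.source ∧ ContMDiffOn 𝓘(ℝ, E) 𝓘(ℝ, E) ∞ e.symm e.target := by
  set φ := chartAt E x
  have hφ : ContMDiffOn 𝓘(ℝ, E) 𝓘(ℝ, E) ∞ φ.symm φ.target := contMDiffOn_chart_symm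
  have hφd (y) (hy : y ∈ φ.target) : MDifferentiableAt 𝓘(ℝ, E) 𝓘(ℝ, E) φ.symm y :=
    (hφ.contMDiffAt (φ.open_target.mem_nhds hy)).mdifferentiableAt (by simp)
  have hinj' (y) (hy : y ∈ φ.target) : Function.Injective (fderiv ℝ (fun z => f (φ.symm z)) y) := by
    intro v w hvw
    rw [fderiv_comp_apply_eq_mfderiv (hf.mdifferentiableAt (by simp)) (hφd y hy),
      fderiv_comp_apply_eq_mfderiv (hf.mdifferentiableAt (by simp)) (hφd y hy)] at hvw
    exact (mdifferentiable_chart x).symm.mfderiv_injective hy (hinj _ hvw)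
  obtain ⟨g, hxg, -, hg, hgs⟩ := exists_openPartialHomeomorph_of_injective_fderiv φ.open_target
    (hf.comp_contMDiffOn hφ).contDiffOn hinj' (mem_chart_target E x)
  have htarget : ∀ z ∈ (φ.trans g).target, z ∈ g.target ∧ g.symm z ∈ φ.target := fun z hz => by
    simpa using hz
  refine ⟨φ.trans g, ?_, fun z hz => ?_, fun z hz => ?_, ?_⟩
  · simpa using ⟨mem_chart_source E x, hxg⟩
  · exact (φ.trans_source g ▸ hz).1
  · have hz' : z ∈ φ.source := (φ.trans_source g ▸ hz).1
    simp [hg, φ.left_inv hz']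
  · exact hφ.comp ((hgs.mono fun z hz => (htarget z hz).1).contMDiffOn)
      fun z hz => (htarget z hz).2

end InverseFunction

section Charts

variable {m : ℕ} {M : Type*} [MetricSpace M] [ChartedSpace (EuclideanSpace ℝ (Fin m)) M]
  {b : EuclideanSpace ℝ (Fin (m + 1))}
  {P : EuclideanSpace ℝ (Fin (m + 1)) →L[ℝ] EuclideanSpace ℝ (Fin m)}
  {ψ ν : M → EuclideanSpace ℝ (Fin (m + 1))}
  {e : OpenPartialHomeomorph M (EuclideanSpace ℝ (Fin m))}

/-- A chart of `M` given by the horizontal projection of the immersion `ψ`, with smooth inverse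
and contained in the domain of a preferred chart. -/
structure IsGraphChart (P : EuclideanSpace ℝ (Fin (m + 1)) →L[ℝ] EuclideanSpace ℝ (Fin m))
    (ψ : M → EuclideanSpace ℝ (Fin (m + 1)))
    (e : OpenPartialHomeomorph M (EuclideanSpace ℝ (Fin m))) : Prop where
  eqOn_proj : EqOn e (fun x => P (ψ x)) e.source
  contMDiffOn_symm : ContMDiffOn (𝓡 m) (𝓡 m) ∞ e.symm e.target
  exists_source_subset : ∃ q : M, e.source ⊆ (chartAt (EuclideanSpace ℝ (Fin m)) q).source

namespace IsGraphChart

theorem proj_symm (he : IsGraphChart P ψ e) {y : EuclideanSpace ℝ (Fin m)} (hy : y ∈ e.target) :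
    P (ψ (e.symm y)) = y :=
  (he.eqOn_proj (e.map_target hy)).symm.trans (e.right_inv hy)

theorem symm_proj (he : IsGraphChart P ψ e) {x : M} (hx : x ∈ e.source) :
    e.symm (P (ψ x)) = x :=
  (congrArg e.symm (he.eqOn_proj hx)).symm.trans (e.left_inv hx)

theorem proj_mem_target (he : IsGraphChart P ψ e) {x : M} (hx : x ∈ e.source) :
    P (ψ x) ∈ e.target :=
  mem_of_eq_of_mem (he.eqOn_proj hx).symm (e.map_source hx)

theorem mdifferentiableAt_symm (he : IsGraphChart P ψ e) {y : EuclideanSpace ℝ (Fin m)}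
    (hy : y ∈ e.target) : MDifferentiableAt (𝓡 m) (𝓡 m) e.symm y :=
  (he.contMDiffOn_symm.contMDiffAt (e.open_target.mem_nhds hy)).mdifferentiableAt (by simp)

section Smooth

variable {W : Type*} [NormedAddCommGroup W] [NormedSpace ℝ W] {f : M → W}

theorem contDiffOn_comp_symm (he : IsGraphChart P ψ e) (hf : ContMDiff (𝓡 m) 𝓘(ℝ, W) ∞ f) :
    ContDiffOn ℝ ∞ (fun y => f (e.symm y)) e.target :=
  (hf.comp_contMDiffOn he.contMDiffOn_symm).contDiffOn

theorem fderiv_comp_symm (he : IsGraphChart P ψ e) (hf : ContMDiff (𝓡 m) 𝓘(ℝ, W) ∞ f)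
    {y : EuclideanSpace ℝ (Fin m)} (hy : y ∈ e.target) (v : EuclideanSpace ℝ (Fin m)) :
    fderiv ℝ (fun y => f (e.symm y)) y v
      = mfderiv (𝓡 m) 𝓘(ℝ, W) f (e.symm y) (mfderiv (𝓡 m) (𝓡 m) e.symm y v) :=
  fderiv_comp_apply_eq_mfderiv (hf.mdifferentiableAt (by simp)) (he.mdifferentiableAt_symm hy) v

end Smooth

end IsGraphChart

variable [RiemannianBundle (fun x : M => TangentSpace (𝓡 m) x)]

theorem IsIsometricImmersion.norm_diff (hψ : IsIsometricImmersion ψ) (x : M)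
    (v : TangentSpace (𝓡 m) x) : ‖diff ψ x v‖ = ‖v‖ := by
  rw [@norm_eq_sqrt_real_inner _ _ _ (diff ψ x v), hψ.inner_diff, ← norm_eq_sqrt_real_inner]

/-- The isometric immersion `ψ` with Gauss map `ν` is transversal to the direction `b`, so that
the image of `ψ` is locally a graph in the coordinates `P` of the hyperplane orthogonal to `b`. -/
structure IsTransversal (b : EuclideanSpace ℝ (Fin (m + 1)))
    (P : EuclideanSpace ℝ (Fin (m + 1)) →L[ℝ] EuclideanSpace ℝ (Fin m))
    (ψ ν : M → EuclideanSpace ℝ (Fin (m + 1))) : Prop where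
  isHorizontalProj : IsHorizontalProj b P
  isIsometricImmersion : IsIsometricImmersion ψ
  isGaussMap : IsGaussMap ψ ν
  pos : ∀ x, 0 < ⟪b, ν x⟫

namespace IsTransversal

theorem injective_proj_diff (h : IsTransversal b P ψ ν) (x : M) :
    Function.Injective fun v : TangentSpace (𝓡 m) x => P (diff ψ x v) := by
  intro v w hvw
  have hdiff : diff ψ x (v - w) = 0 := h.isHorizontalProj.eq_zero_of_inner_eq_zero (h.pos x).ne'
    (by rw [map_sub, map_sub, sub_eq_zero]; exact hvw) (h.isGaussMap.normal x _)
  rw [← sub_eq_zero, ← norm_eq_zero, ← h.isIsometricImmersion.norm_diff, hdiff, norm_zero]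

theorem isGraphParam (h : IsTransversal b P ψ ν) (he : IsGraphChart P ψ e) :
    IsGraphParam b P e.target (fun y => ψ (e.symm y)) (fun y => ν (e.symm y)) where
  isHorizontalProj := h.isHorizontalProj
  isOpen := e.open_target
  contDiffOn := he.contDiffOn_comp_symm h.isIsometricImmersion.contMDiff
  contDiffOn_normal := he.contDiffOn_comp_symm h.isGaussMap.contMDiff
  proj y hy := he.proj_symm hy
  norm_eq_one y _ := h.isGaussMap.norm_eq_one _
  normal y hy v := by
    rw [he.fderiv_comp_symm h.isIsometricImmersion.contMDiff hy]
    exact h.isGaussMap.normal _ _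
  pos y _ := h.pos _

theorem exists_isGraphChart [IsManifold (𝓡 m) ∞ M] (h : IsTransversal b P ψ ν) (x : M) :
    ∃ e : OpenPartialHomeomorph M (EuclideanSpace ℝ (Fin m)), IsGraphChart P ψ e ∧
      x ∈ e.source := by
  have hψ := h.isIsometricImmersion.contMDiff
  have hmfderiv (x : M) : mfderiv (𝓡 m) (𝓡 m) (fun z => P (ψ z)) x = P ∘L diff ψ x :=
    (P.hasMFDerivAt.comp x (hψ.mdifferentiableAt (by simp)).hasMFDerivAt).mfderiv
  obtain ⟨e, hx, hsub, heq, hsymm⟩ := exists_openPartialHomeomorph_of_injective_mfderiv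
    (P.contDiff.contMDiff.comp hψ) (fun x => (hmfderiv x).symm ▸ h.injective_proj_diff x) x
  exact ⟨e, ⟨heq, hsymm, x, hsub⟩, hx⟩

end IsTransversal

end Charts

section Distance

section ManifoldWithCorners

variable {E H M : Type*} [NormedAddCommGroup E] [NormedSpace ℝ E] [TopologicalSpace H]
  (I : ModelWithCorners ℝ E H) [PseudoMetricSpace M] [ChartedSpace H M]
  [RiemannianBundle (fun x : M => TangentSpace I x)]

theorem edist_le_mul_pathELength {V : Type*} [NormedAddCommGroup V] [InnerProductSpace ℝ V]
    {f : M → V} {C : ℝ≥0}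
    (hf : ContMDiff I 𝓘(ℝ, V) 1 f)
    (hC : ∀ x (v : TangentSpace I x), ‖mfderiv I 𝓘(ℝ, V) f x v‖ ≤ C * ‖v‖) {γ : ℝ → M}
    (hγ : ContMDiffOn 𝓘(ℝ, ℝ) I 1 γ (Icc 0 1)) :
    edist (f (γ 0)) (f (γ 1)) ≤ C * pathELength I γ 0 1 := by
  calc edist (f (γ 0)) (f (γ 1)) = riemannianEDist 𝓘(ℝ, V) (f (γ 0)) (f (γ 1)) :=
        IsRiemannianManifold.out _ _
    _ ≤ pathELength 𝓘(ℝ, V) (f ∘ γ) 0 1 :=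
        riemannianEDist_le_pathELength (hf.comp_contMDiffOn hγ) rfl rfl zero_le_one
    _ ≤ ∫⁻ t in Icc (0 : ℝ) 1, C * ‖mfderivWithin 𝓘(ℝ, ℝ) I γ (Icc 0 1) t 1‖ₑ := by
        rw [pathELength_eq_lintegral_mfderivWithin_Icc]
        refine setLIntegral_mono' measurableSet_Icc fun t ht => ?_
        rw [mfderiv_comp_mfderivWithin t (hf.mdifferentiableAt one_ne_zero)
          (hγ.mdifferentiableOn one_ne_zero t ht)
          (uniqueDiffOn_Icc zero_lt_one t ht).uniqueMDiffWithinAt]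
        rw [← ofReal_norm, ← ofReal_norm, ← ENNReal.ofReal_coe_nnreal,
          ← ENNReal.ofReal_mul C.coe_nonneg]
        exact ENNReal.ofReal_le_ofReal (hC _ _)
    _ = C * pathELength I γ 0 1 := by
        rw [lintegral_const_mul' _ _ ENNReal.coe_ne_top, pathELength_eq_lintegral_mfderivWithin_Icc]

theorem dist_le_of_forall_norm_mfderiv_le [IsRiemannianManifold I M] {γ : ℝ → M} {C : ℝ}
    (hγ : ContMDiffOn 𝓘(ℝ, ℝ) I 1 γ (Icc 0 1))
    (hC : ∀ t ∈ Icc (0 : ℝ) 1, ‖mfderiv 𝓘(ℝ, ℝ) I γ t 1‖ ≤ C) : dist (γ 0) (γ 1) ≤ C := by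
  have hC0 : 0 ≤ C := (norm_nonneg _).trans (hC 0 (by simp))
  rw [← ENNReal.ofReal_le_ofReal_iff hC0, ← edist_dist, IsRiemannianManifold.out (I := I)]
  calc riemannianEDist I (γ 0) (γ 1) ≤ pathELength I γ 0 1 :=
        riemannianEDist_le_pathELength hγ rfl rfl zero_le_one
    _ ≤ ∫⁻ _ in Icc (0 : ℝ) 1, ENNReal.ofReal C := by
        rw [pathELength_eq_lintegral_mfderiv_Icc]
        refine setLIntegral_mono measurable_const fun t ht => ?_
        rw [← ofReal_norm]
        exact ENNReal.ofReal_le_ofReal (hC t ht)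
    _ = ENNReal.ofReal C := by simp

theorem isLengthMetric_of_isRiemannianManifold [IsRiemannianManifold I M] : IsLengthMetric M := by
  intro x y r δ hr0 hr hδ
  have hlt : riemannianEDist I x y < ENNReal.ofReal (dist x y + δ) := by
    rw [← IsRiemannianManifold.out, edist_dist]
    exact (ENNReal.ofReal_lt_ofReal_iff (by positivity)).2 (by linarith)
  obtain ⟨γ, rfl, rfl, hγ, hlen⟩ := exists_lt_of_riemannianEDist_lt hlt
  have hcont : ContinuousOn (fun t => dist (γ 0) (γ t)) (Icc 0 1) :=
    (continuous_const.dist continuous_id).comp_continuousOn hγ.continuousOn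
  obtain ⟨t, ht, rfl⟩ := intermediate_value_Icc zero_le_one hcont ⟨by simpa using hr0, hr.le⟩
  refine ⟨γ t, le_rfl, ?_⟩
  have hsum : edist (γ 0) (γ t) + edist (γ t) (γ 1) < ENNReal.ofReal (dist (γ 0) (γ 1) + δ) := by
    rw [IsRiemannianManifold.out (I := I), IsRiemannianManifold.out (I := I)]
    refine lt_of_le_of_lt (add_le_add ?_ ?_) ((pathELength_add ht.1 ht.2).trans_lt hlen)
    · exact riemannianEDist_le_pathELength (hγ.mono (Icc_subset_Icc_right ht.2)) rfl rfl ht.1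
    · exact riemannianEDist_le_pathELength (hγ.mono (Icc_subset_Icc_left ht.1)) rfl rfl ht.2
  rw [edist_dist, edist_dist, ← ENNReal.ofReal_add dist_nonneg dist_nonneg,
    ENNReal.ofReal_lt_ofReal_iff (by positivity)] at hsum
  linarith

theorem lipschitzWith_of_forall_norm_mfderiv_le [IsRiemannianManifold I M] {V : Type*}
    [NormedAddCommGroup V] [InnerProductSpace ℝ V] {f : M → V} {C : ℝ≥0}
    (hf : ContMDiff I 𝓘(ℝ, V) 1 f)
    (hC : ∀ x (v : TangentSpace I x), ‖mfderiv I 𝓘(ℝ, V) f x v‖ ≤ C * ‖v‖) :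
    LipschitzWith C f := by
  refine fun x y => ENNReal.le_mul_of_forall_lt (.inr (edist_ne_top x y))
    (.inl ENNReal.coe_ne_top) fun C' hC' r hr => ?_
  rw [IsRiemannianManifold.out (I := I)] at hr
  obtain ⟨γ, rfl, rfl, hγ, hlen⟩ := exists_lt_of_riemannianEDist_lt hr
  exact (edist_le_mul_pathELength I hf hC hγ).trans (mul_le_mul' hC'.le hlen.le)

theorem properSpace_of_isRiemannianManifold [IsRiemannianManifold I M] [FiniteDimensional ℝ E]
    [CompleteSpace M] : ProperSpace M :=
  have : LocallyCompactSpace M := Manifold.locallyCompact_of_finiteDimensional I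
  (isLengthMetric_of_isRiemannianManifold I).properSpace

end ManifoldWithCorners

variable {m : ℕ} {M : Type*} [MetricSpace M] [ChartedSpace (EuclideanSpace ℝ (Fin m)) M]
  [RiemannianBundle (fun x : M => TangentSpace (𝓡 m) x)]
  [IsRiemannianManifold (𝓡 m) M]

theorem IsIsometricImmersion.lipschitzWith {ψ : M → EuclideanSpace ℝ (Fin (m + 1))}
    (hψ : IsIsometricImmersion ψ) : LipschitzWith 1 ψ :=
  lipschitzWith_of_forall_norm_mfderiv_le (𝓡 m) (hψ.contMDiff.of_le (by simp))
    fun x v => by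
      rw [norm_tangentSpace_vectorSpace, NNReal.coe_one, one_mul]
      exact (hψ.norm_diff x v).le

theorem IsGraphChart.dist_symm_le
    {P : EuclideanSpace ℝ (Fin (m + 1)) →L[ℝ] EuclideanSpace ℝ (Fin m)}
    {ψ : M → EuclideanSpace ℝ (Fin (m + 1))}
    {e : OpenPartialHomeomorph M (EuclideanSpace ℝ (Fin m))} (he : IsGraphChart P ψ e)
    (hψ : IsIsometricImmersion ψ) {y v : EuclideanSpace ℝ (Fin m)} {C : ℝ}
    (hseg : ∀ t ∈ Icc (0 : ℝ) 1, y + t • v ∈ e.target)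
    (hC : ∀ t ∈ Icc (0 : ℝ) 1, ‖fderiv ℝ (fun y => ψ (e.symm y)) (y + t • v) v‖ ≤ C) :
    dist (e.symm y) (e.symm (y + v)) ≤ C := by
  have hline (t : ℝ) : HasFDerivAt (fun t : ℝ => y + t • v)
      ((ContinuousLinearMap.id ℝ ℝ).smulRight v) t :=
    ((hasFDerivAt_id t).smul_const v).const_add y
  have hγ : ContMDiffOn 𝓘(ℝ, ℝ) (𝓡 m) 1 (fun t : ℝ => e.symm (y + t • v)) (Icc 0 1) := by
    have hsmooth : ContDiff ℝ ∞ (fun t : ℝ => y + t • v) := by fun_prop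
    exact (he.contMDiffOn_symm.comp hsmooth.contMDiff.contMDiffOn hseg).of_le
      (by exact_mod_cast le_top)
  suffices dist (e.symm (y + (0 : ℝ) • v)) (e.symm (y + (1 : ℝ) • v)) ≤ C by simpa using this
  refine dist_le_of_forall_norm_mfderiv_le (𝓡 m) hγ fun t ht => ?_
  have hderiv : mfderiv 𝓘(ℝ, ℝ) (𝓡 m) (fun t : ℝ => e.symm (y + t • v)) t 1
      = mfderiv (𝓡 m) (𝓡 m) e.symm (y + t • v) v := by
    have hcomp := ((he.mdifferentiableAt_symm (hseg t ht)).hasMFDerivAt.comp t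
      (hline t).hasMFDerivAt).mfderiv
    refine (DFunLike.congr_fun hcomp (1 : ℝ)).trans ?_
    exact congrArg (mfderiv (𝓡 m) (𝓡 m) e.symm (y + t • v)) (one_smul ℝ v)
  rw [hderiv, ← hψ.norm_diff]
  have hCt := hC t ht
  rwa [he.fderiv_comp_symm hψ.contMDiff (hseg t ht)] at hCt

theorem IsGraphChart.lipschitzOnWith_symm
    {P : EuclideanSpace ℝ (Fin (m + 1)) →L[ℝ] EuclideanSpace ℝ (Fin m)}
    {ψ : M → EuclideanSpace ℝ (Fin (m + 1))}
    {e : OpenPartialHomeomorph M (EuclideanSpace ℝ (Fin m))} (he : IsGraphChart P ψ e)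
    (hψ : IsIsometricImmersion ψ) {s : Set (EuclideanSpace ℝ (Fin m))} (hs : Convex ℝ s)
    (hsub : s ⊆ e.target) {C : ℝ≥0}
    (hC : ∀ y ∈ s, ‖fderiv ℝ (fun y => ψ (e.symm y)) y‖ ≤ C) : LipschitzOnWith C e.symm s := by
  refine LipschitzOnWith.of_dist_le_mul fun y hy z hz => ?_
  have hseg (t : ℝ) (ht : t ∈ Icc (0 : ℝ) 1) : y + t • (z - y) ∈ s :=
    hs.add_smul_sub_mem hy hz ht
  have := he.dist_symm_le hψ (fun t ht => hsub (hseg t ht))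
    fun t ht => ContinuousLinearMap.le_of_opNorm_le _ (hC _ (hseg t ht)) (z - y)
  rwa [add_sub_cancel, ← dist_eq_norm, dist_comm z y] at this

end Distance

section OrthonormalImage

variable {E V ι : Type*} [NormedAddCommGroup E] [InnerProductSpace ℝ E]
  [NormedAddCommGroup V] [InnerProductSpace ℝ V] {v : Module.Basis ι ℝ E}

theorem repr_apply_eq_inner_of_orthonormal [Finite ι] {D : E →L[ℝ] V}
    (hv : Orthonormal ℝ fun i => D (v i)) (w : E) (i : ι) : v.repr w i = ⟪D w, D (v i)⟫ := by
  have := Fintype.ofFinite ι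
  conv_rhs => rw [← v.sum_repr w]
  simp only [map_sum, map_smul]
  simpa using (hv.inner_left_fintype (v.repr w) i).symm

variable [Fintype ι]

theorem trace_eq_sum_inner_of_orthonormal {D : E →L[ℝ] V}
    (hv : Orthonormal ℝ fun i => D (v i)) (S : E →L[ℝ] E) :
    LinearMap.trace ℝ E S = ∑ i, ⟪D (S (v i)), D (v i)⟫ := by
  classical
  rw [LinearMap.trace_eq_matrix_trace ℝ v, Matrix.trace]
  refine Finset.sum_congr rfl fun i _ => ?_
  rw [Matrix.diag_apply, LinearMap.toMatrix_apply]
  exact repr_apply_eq_inner_of_orthonormal hv _ i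

theorem norm_sq_eq_sum_inner_sq_of_orthonormal {D : E →L[ℝ] V}
    (hv : Orthonormal ℝ fun i => D (v i)) (w : E) :
    ‖D w‖ ^ 2 = ∑ i, ⟪D w, D (v i)⟫ ^ 2 := by
  rw [← real_inner_self_eq_norm_sq]
  nth_rw 2 [← v.sum_repr w]
  rw [map_sum, inner_sum]
  refine Finset.sum_congr rfl fun i _ => ?_
  rw [map_smul, real_inner_smul_right, repr_apply_eq_inner_of_orthonormal hv, sq]

variable {b : V} {P : V →L[ℝ] E} {U : Set E} {F N : E → V} {y : E}

theorem IsGraphParam.fderiv_gaussOp (h : IsGraphParam b P U F N) (hy : y ∈ U) (w : E) :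
    fderiv ℝ F y (gaussOp P N y w) = fderiv ℝ N y w :=
  h.fderiv_proj hy (h.inner_fderiv_normal hy w)

theorem IsGraphParam.trace_gaussOp (h : IsGraphParam b P U F N) (hy : y ∈ U)
    (hv : Orthonormal ℝ fun i => fderiv ℝ F y (v i)) :
    LinearMap.trace ℝ E (gaussOp P N y) = ∑ i, ⟪fderiv ℝ N y (v i), fderiv ℝ F y (v i)⟫ := by
  simp only [trace_eq_sum_inner_of_orthonormal hv, h.fderiv_gaussOp hy]

theorem IsGraphParam.trace_gaussOp_comp_self (h : IsGraphParam b P U F N) (hy : y ∈ U)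
    (hv : Orthonormal ℝ fun i => fderiv ℝ F y (v i)) :
    LinearMap.trace ℝ E (gaussOp P N y ∘L gaussOp P N y : E →L[ℝ] E) =
      ∑ i, ∑ j, ⟪fderiv ℝ N y (v i), fderiv ℝ F y (v j)⟫ ^ 2 := by
  rw [trace_eq_sum_inner_of_orthonormal hv]
  refine Finset.sum_congr rfl fun i _ => ?_
  rw [ContinuousLinearMap.comp_apply, h.fderiv_gaussOp hy, h.inner_fderiv_normal_comm hy,
    h.fderiv_gaussOp hy, real_inner_self_eq_norm_sq, ← h.fderiv_gaussOp hy,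
    norm_sq_eq_sum_inner_sq_of_orthonormal hv]

end OrthonormalImage

section SecondFundamentalForm

variable {m : ℕ} {M : Type*} [MetricSpace M] [ChartedSpace (EuclideanSpace ℝ (Fin m)) M]
  {b : EuclideanSpace ℝ (Fin (m + 1))}
  {P : EuclideanSpace ℝ (Fin (m + 1)) →L[ℝ] EuclideanSpace ℝ (Fin m)}
  {ψ ν : M → EuclideanSpace ℝ (Fin (m + 1))}
  {e : OpenPartialHomeomorph M (EuclideanSpace ℝ (Fin m))} {y : EuclideanSpace ℝ (Fin m)}

theorem finrank_tangentSpace_euclidean (x : M) :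
    Module.finrank ℝ (TangentSpace (𝓡 m) x) = m :=
  finrank_euclideanSpace_fin (𝕜 := ℝ)

theorem IsGaussMap.inner_normalPart (hν : IsGaussMap ψ ν) (x : M)
    (z : EuclideanSpace ℝ (Fin (m + 1))) : ⟪normalPart ψ x z, ν x⟫ = ⟪z, ν x⟫ := by
  have hmem : ν x ∈ ((diff ψ x).range)ᗮ := by
    rintro _ ⟨v, rfl⟩
    exact hν.normal x v
  rw [normalPart, Submodule.inner_starProjection_left_eq_right,
    Submodule.starProjection_eq_self_iff.2 hmem]

variable [RiemannianBundle (fun x : M => TangentSpace (𝓡 m) x)]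

namespace IsTransversal

/-- The images under `P ∘ dψ` of the orthonormal basis of the tangent space at `x` that computes
`normA` and `meanCurvatureVector`, as a basis of the coordinate space. -/
def projBasis (h : IsTransversal b P ψ ν) (x : M) :
    Module.Basis (Fin (Module.finrank ℝ (TangentSpace (𝓡 m) x))) ℝ (EuclideanSpace ℝ (Fin m)) :=
  (stdOrthonormalBasis ℝ (TangentSpace (𝓡 m) x)).toBasis.map
    (LinearMap.linearEquivOfInjective (P ∘L diff ψ x : TangentSpace (𝓡 m) x →ₗ[ℝ] _)
      (h.injective_proj_diff x) rfl)

theorem projBasis_apply (h : IsTransversal b P ψ ν) (x : M)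
    (i : Fin (Module.finrank ℝ (TangentSpace (𝓡 m) x))) :
    h.projBasis x i = P (diff ψ x (stdOrthonormalBasis ℝ (TangentSpace (𝓡 m) x) i)) := by
  rw [projBasis, Module.Basis.map_apply, OrthonormalBasis.coe_toBasis]
  rfl

theorem fderiv_proj_diff (h : IsTransversal b P ψ ν) (he : IsGraphChart P ψ e)
    (hy : y ∈ e.target) (t : TangentSpace (𝓡 m) (e.symm y)) :
    fderiv ℝ (fun z => ψ (e.symm z)) y (P (diff ψ (e.symm y) t)) = diff ψ (e.symm y) t :=
  (h.isGraphParam he).fderiv_proj hy (h.isGaussMap.normal _ t)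

theorem mfderiv_symm_proj_diff (h : IsTransversal b P ψ ν) (he : IsGraphChart P ψ e)
    (hy : y ∈ e.target) (t : TangentSpace (𝓡 m) (e.symm y)) :
    mfderiv (𝓡 m) (𝓡 m) e.symm y (P (diff ψ (e.symm y) t)) = t := by
  refine h.injective_proj_diff _ (congrArg P ?_)
  exact (he.fderiv_comp_symm h.isIsometricImmersion.contMDiff hy _).symm.trans
    (h.fderiv_proj_diff he hy t)

theorem fderiv_normal_proj_diff (h : IsTransversal b P ψ ν) (he : IsGraphChart P ψ e)
    (hy : y ∈ e.target) (t : TangentSpace (𝓡 m) (e.symm y)) :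
    fderiv ℝ (fun z => ν (e.symm z)) y (P (diff ψ (e.symm y) t)) = diff ν (e.symm y) t := by
  rw [he.fderiv_comp_symm h.isGaussMap.contMDiff hy]
  exact congrArg (diff ν (e.symm y)) (h.mfderiv_symm_proj_diff he hy t)

theorem orthonormal_fderiv_projBasis (h : IsTransversal b P ψ ν) (he : IsGraphChart P ψ e)
    (hy : y ∈ e.target) :
    Orthonormal ℝ fun i => fderiv ℝ (fun z => ψ (e.symm z)) y (h.projBasis (e.symm y) i) := by
  classical
  refine orthonormal_iff_ite.2 fun i j => ?_
  rw [projBasis_apply, projBasis_apply, h.fderiv_proj_diff he hy, h.fderiv_proj_diff he hy,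
    h.isIsometricImmersion.inner_diff, OrthonormalBasis.inner_eq_ite]

theorem trace_gaussOp_comp_self_eq_normA_sq (h : IsTransversal b P ψ ν) (he : IsGraphChart P ψ e)
    (hy : y ∈ e.target) :
    LinearMap.trace ℝ (EuclideanSpace ℝ (Fin m)) (gaussOp P (fun z => ν (e.symm z)) y ∘L
      gaussOp P (fun z => ν (e.symm z)) y : _ →L[ℝ] EuclideanSpace ℝ (Fin m)) =
        normA ψ ν (e.symm y) ^ 2 := by
  rw [(h.isGraphParam he).trace_gaussOp_comp_self hy (h.orthonormal_fderiv_projBasis he hy), normA,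
    Real.sq_sqrt (Finset.sum_nonneg fun i _ => Finset.sum_nonneg fun j _ => sq_nonneg _)]
  simp only [projBasis_apply, h.fderiv_proj_diff he hy, h.fderiv_normal_proj_diff he hy,
    secondFundForm, neg_sq]

theorem trace_gaussOp_eq_neg_sum (h : IsTransversal b P ψ ν) (he : IsGraphChart P ψ e)
    (hy : y ∈ e.target) :
    LinearMap.trace ℝ (EuclideanSpace ℝ (Fin m)) (gaussOp P (fun z => ν (e.symm z)) y) =
      -∑ i, secondFundForm ψ ν (e.symm y) (stdOrthonormalBasis ℝ (TangentSpace (𝓡 m) (e.symm y)) i)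
        (stdOrthonormalBasis ℝ (TangentSpace (𝓡 m) (e.symm y)) i) := by
  rw [(h.isGraphParam he).trace_gaussOp hy (h.orthonormal_fderiv_projBasis he hy)]
  simp only [projBasis_apply, h.fderiv_proj_diff he hy, h.fderiv_normal_proj_diff he hy,
    secondFundForm, Finset.sum_neg_distrib, neg_neg]

end IsTransversal

theorem IsSoliton.sum_secondFundForm {c : ℝ} (hsol : IsSoliton ψ ν c) (hν : IsGaussMap ψ ν)
    (x : M) :
    ∑ i, secondFundForm ψ ν x (stdOrthonormalBasis ℝ (TangentSpace (𝓡 m) x) i)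
      (stdOrthonormalBasis ℝ (TangentSpace (𝓡 m) x) i) = c * ⟪ψ x, ν x⟫ := by
  set s := ∑ i, secondFundForm ψ ν x (stdOrthonormalBasis ℝ (TangentSpace (𝓡 m) x) i)
    (stdOrthonormalBasis ℝ (TangentSpace (𝓡 m) x) i) with hs
  have hinner : (m : ℝ) * (1 / m * s) = c * ⟪ψ x, ν x⟫ := by
    have := congrArg (fun z => ⟪z, ν x⟫) (hsol x)
    simpa only [meanCurvatureVector, real_inner_smul_left, real_inner_self_eq_norm_sq,
      hν.norm_eq_one, hν.inner_normalPart, one_pow, mul_one] using this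
  rw [← hinner]
  rcases eq_or_ne m 0 with hm | hm
  · have : IsEmpty (Fin (Module.finrank ℝ (TangentSpace (𝓡 m) x))) := by
      rw [finrank_tangentSpace_euclidean, hm]
      infer_instance
    simp [hs]
  · field_simp

theorem IsTransversal.trace_gaussOp_eq {c : ℝ} (h : IsTransversal b P ψ ν)
    (hsol : IsSoliton ψ ν c) (he : IsGraphChart P ψ e) (hy : y ∈ e.target) :
    LinearMap.trace ℝ (EuclideanSpace ℝ (Fin m)) (gaussOp P (fun z => ν (e.symm z)) y) =
      -(c * ⟪ψ (e.symm y), ν (e.symm y)⟫) := by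
  rw [h.trace_gaussOp_eq_neg_sum he hy, hsol.sum_secondFundForm h.isGaussMap]

end SecondFundamentalForm

section Volume

section Measure

variable {X : Type*} [MeasurableSpace X]

theorem iSup_measure_restrict_eq {ι : Sort*} {μ : ι → Measure X} {s : Set X}
    (hs : MeasurableSet s) {j : ι} (h : ∀ i, (μ i).restrict s ≤ (μ j).restrict s) :
    (⨆ i, μ i).restrict s = (μ j).restrict s := by
  refine le_antisymm ?_ (Measure.restrict_mono_measure (le_iSup μ j) s)
  have hsup : ⨆ i, μ i ≤ (μ j).restrict s + (⨆ i, μ i).restrict sᶜ := iSup_le fun i => by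
    rw [← Measure.restrict_add_restrict_compl (μ := μ i) hs]
    exact add_le_add (h i) (Measure.restrict_mono_measure (le_iSup μ i) _)
  calc (⨆ i, μ i).restrict s
      ≤ ((μ j).restrict s + (⨆ i, μ i).restrict sᶜ).restrict s :=
        Measure.restrict_mono_measure hsup s
    _ = (μ j).restrict s := by
        simp [Measure.restrict_add, Measure.restrict_restrict hs]

theorem le_of_withDensity_le_withDensity {μ μ' : Measure X} {f : X → ℝ≥0∞} (hf : Measurable f)
    (hf0 : ∀ x, f x ≠ 0) (hftop : ∀ x, f x ≠ ⊤) (h : μ.withDensity f ≤ μ'.withDensity f) :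
    μ ≤ μ' := by
  rw [← withDensity_inv_same hf (ae_of_all μ hf0) (ae_of_all μ hftop),
    ← withDensity_inv_same hf (ae_of_all μ' hf0) (ae_of_all μ' hftop)]
  refine Measure.le_iff.2 fun t ht => ?_
  rw [withDensity_apply _ ht, withDensity_apply _ ht]
  exact lintegral_mono' (Measure.restrict_mono_measure h t) le_rfl

theorem measurableSet_preimage_symm_inter_target {Y : Type*} [TopologicalSpace X] [BorelSpace X]
    [TopologicalSpace Y] [MeasurableSpace Y] [OpensMeasurableSpace Y]
    (e : OpenPartialHomeomorph X Y) {s : Set X} (hs : MeasurableSet s) :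
    MeasurableSet (e.symm ⁻¹' s ∩ e.target) := by
  have hsymm : Measurable (e.target.domRestrict e.symm) :=
    (continuousOn_iff_continuous_domRestrict.1 e.continuousOn_symm).measurable
  rw [inter_comm, ← Subtype.image_preimage_coe]
  exact e.open_target.measurableSet.subtype_image (hsymm hs)

end Measure

variable {m : ℕ} {M : Type*} [MetricSpace M] [ChartedSpace (EuclideanSpace ℝ (Fin m)) M]
  {b : EuclideanSpace ℝ (Fin (m + 1))}
  {P : EuclideanSpace ℝ (Fin (m + 1)) →L[ℝ] EuclideanSpace ℝ (Fin m)}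
  {ψ ν : M → EuclideanSpace ℝ (Fin (m + 1))}
  {e : OpenPartialHomeomorph M (EuclideanSpace ℝ (Fin m))}

theorem IsGaussMap.measurable_ofReal_inner [MeasurableSpace M] [BorelSpace M]
    (hν : IsGaussMap ψ ν) : Measurable fun x => ENNReal.ofReal ⟪b, ν x⟫ :=
  (continuous_const.inner hν.contMDiff.continuous).measurable.ennreal_ofReal

variable [RiemannianBundle (fun x : M => TangentSpace (𝓡 m) x)]

namespace IsTransversal

variable [IsManifold (𝓡 m) ∞ M]

theorem sqrt_det_gramMatrix_mul (h : IsTransversal b P ψ ν) (q : M)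
    {y : EuclideanSpace ℝ (Fin m)} (hy : y ∈ (chartAt (EuclideanSpace ℝ (Fin m)) q).target) :
    √(gramMatrix q y).det * ⟪b, ν ((chartAt (EuclideanSpace ℝ (Fin m)) q).symm y)⟫ =
      |(P ∘L fderiv ℝ
        (fun z => ψ ((chartAt (EuclideanSpace ℝ (Fin m)) q).symm z)) y).det| := by
  set c := chartAt (EuclideanSpace ℝ (Fin m)) q
  have hcs : ContMDiffOn (𝓡 m) (𝓡 m) ∞ c.symm c.target := contMDiffOn_chart_symm
  have hderiv (v) : fderiv ℝ (fun z => ψ (c.symm z)) y v =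
      diff ψ (c.symm y) (mfderiv (𝓡 m) (𝓡 m) c.symm y v) :=
    fderiv_comp_apply_eq_mfderiv (h.isIsometricImmersion.contMDiff.mdifferentiableAt (by simp))
      ((hcs.contMDiffAt (c.open_target.mem_nhds hy)).mdifferentiableAt (by simp)) v
  have hgram : gramMatrix q y = Matrix.gram ℝ fun i =>
      fderiv ℝ (fun z => ψ (c.symm z)) y (EuclideanSpace.basisFun (Fin m) ℝ i) := by
    ext i j
    rw [Matrix.gram_apply, hderiv, hderiv, h.isIsometricImmersion.inner_diff,
      EuclideanSpace.basisFun_apply, EuclideanSpace.basisFun_apply]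
    rfl
  rw [hgram]
  refine h.isHorizontalProj.sqrt_det_gram_mul _ _ (h.isGaussMap.norm_eq_one _) (fun v => ?_)
    (h.pos _)
  rw [hderiv]
  exact h.isGaussMap.normal _ _

theorem continuousOn_sqrt_det_gramMatrix (h : IsTransversal b P ψ ν) (q : M) :
    ContinuousOn (fun y => √(gramMatrix q y).det)
      (chartAt (EuclideanSpace ℝ (Fin m)) q).target := by
  set c := chartAt (EuclideanSpace ℝ (Fin m)) q
  have hcs : ContMDiffOn (𝓡 m) (𝓡 m) ∞ c.symm c.target := contMDiffOn_chart_symm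
  have hfderiv : ContinuousOn (fderiv ℝ fun z => ψ (c.symm z)) c.target :=
    (h.isIsometricImmersion.contMDiff.comp_contMDiffOn hcs).contDiffOn.continuousOn_fderiv_of_isOpen
      c.open_target (by simp)
  have hdet : ContinuousOn (fun y => |(P ∘L fderiv ℝ (fun z => ψ (c.symm z)) y).det|) c.target :=
    (ContinuousLinearMap.continuous_det.comp_continuousOn
      (continuousOn_const.clm_comp hfderiv)).abs
  refine (hdet.div (continuousOn_const.inner (h.isGaussMap.contMDiff.continuous.comp_continuousOn
    c.continuousOn_symm)) fun y _ => (h.pos _).ne').congr fun y hy => ?_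
  exact eq_div_of_mul_eq (h.pos _).ne' (h.sqrt_det_gramMatrix_mul q hy)

end IsTransversal

variable [MeasurableSpace M]

variable (m) in
/-- The measure `⟨b, ν⟩ dvol`: it reads as Lebesgue measure in graph charts. -/
def graphMeasure (b : EuclideanSpace ℝ (Fin (m + 1))) (ν : M → EuclideanSpace ℝ (Fin (m + 1))) :
    Measure M :=
  (riemannianVolume m M).withDensity fun x => ENNReal.ofReal ⟪b, ν x⟫

variable [BorelSpace M]

theorem setLIntegral_chartVolume {q : M}
    (hq : AEMeasurable (fun y => √(gramMatrix q y).det)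
      (volume.restrict (chartAt (EuclideanSpace ℝ (Fin m)) q).target))
    {f : M → ℝ≥0∞} (hf : Measurable f) {S : Set M} (hS : MeasurableSet S) :
    ∫⁻ x in S, f x ∂(chartVolume (m := m) q) =
      ∫⁻ y in (chartAt (EuclideanSpace ℝ (Fin m)) q).symm ⁻¹' S ∩
        (chartAt (EuclideanSpace ℝ (Fin m)) q).target,
        ENNReal.ofReal √(gramMatrix q y).det *
          f ((chartAt (EuclideanSpace ℝ (Fin m)) q).symm y) := by
  set c := chartAt (EuclideanSpace ℝ (Fin m)) q
  have hct : MeasurableSet c.target := c.open_target.measurableSet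
  have hsymm : AEMeasurable c.symm (volume.restrict c.target) :=
    c.continuousOn_symm.aemeasurable hct
  have hsymm' : AEMeasurable c.symm ((volume.restrict c.target).withDensity fun y =>
      ENNReal.ofReal √(gramMatrix q y).det) :=
    hsymm.mono_ac (withDensity_absolutelyContinuous _ _)
  rw [chartVolume, restrict_withDensity hct, ← lintegral_indicator hS,
    lintegral_map' (hf.indicator hS).aemeasurable hsymm',
    lintegral_withDensity_eq_lintegral_mul₀ hq.ennreal_ofReal
      (g := fun y => S.indicator f (c.symm y)) ((hf.indicator hS).comp_aemeasurable hsymm),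
    ← Measure.restrict_restrict' hct,
    ← lintegral_indicator₀ (hsymm.nullMeasurableSet_preimage hS)]
  refine lintegral_congr fun y => ?_
  by_cases hy : c.symm y ∈ S <;> simp [hy]

namespace IsTransversal

variable [IsManifold (𝓡 m) ∞ M]

theorem withDensity_chartVolume_apply (h : IsTransversal b P ψ ν) (he : IsGraphChart P ψ e) (q : M)
    {S : Set M} (hS : MeasurableSet S) (hSe : S ⊆ e.source) :
    (chartVolume (m := m) q).withDensity (fun x => ENNReal.ofReal ⟪b, ν x⟫) S =
      volume ((fun x => P (ψ x)) '' (S ∩ (chartAt (EuclideanSpace ℝ (Fin m)) q).source)) := by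
  set c := chartAt (EuclideanSpace ℝ (Fin m)) q
  set s := c.symm ⁻¹' S ∩ c.target with hs
  have hsmeas : MeasurableSet s := measurableSet_preimage_symm_inter_target c hS
  have himage : (fun x => P (ψ x)) '' (S ∩ c.source) = (fun y => P (ψ (c.symm y))) '' s := by
    have hsymm : c.symm '' s = S ∩ c.source := by
      rw [hs, inter_comm, inter_comm S]
      exact (c.symm.image_source_inter_eq' _).trans (c.source_inter_preimage_inv_preimage S)
    rw [← hsymm, image_image]
  have hcs : ContMDiffOn (𝓡 m) (𝓡 m) ∞ c.symm c.target := contMDiffOn_chart_symm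
  have hfderiv (y) (hy : y ∈ s) : HasFDerivWithinAt (fun y => P (ψ (c.symm y)))
      (P ∘L fderiv ℝ (fun y => ψ (c.symm y)) y) s y := by
    have hsmooth := (h.isIsometricImmersion.contMDiff.comp_contMDiffOn hcs).contDiffOn
    exact (P.hasFDerivAt.comp y ((hsmooth.contDiffAt (c.open_target.mem_nhds hy.2)).differentiableAt
      (by simp)).hasFDerivAt).hasFDerivWithinAt
  have hinj : InjOn (fun y => P (ψ (c.symm y))) s := by
    intro y hy z hz hyz
    have hsymm : c.symm y = c.symm z := by
      rw [← he.symm_proj (hSe hy.1), ← he.symm_proj (hSe hz.1)]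
      exact congrArg e.symm hyz
    rw [← c.right_inv hy.2, ← c.right_inv hz.2, hsymm]
  have hq := (h.continuousOn_sqrt_det_gramMatrix q).aemeasurable (μ := volume)
    c.open_target.measurableSet
  rw [withDensity_apply _ hS, setLIntegral_chartVolume hq h.isGaussMap.measurable_ofReal_inner hS,
    himage, ← setLIntegral_one,
    lintegral_image_eq_lintegral_abs_det_fderiv_mul volume hsmeas hfderiv hinj]
  refine setLIntegral_congr_fun hsmeas fun y hy => ?_
  simp only []
  rw [← ENNReal.ofReal_mul (Real.sqrt_nonneg _), h.sqrt_det_gramMatrix_mul q hy.2, mul_one]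

theorem restrict_chartVolume_le (h : IsTransversal b P ψ ν) (he : IsGraphChart P ψ e) {q : M}
    (hq : e.source ⊆ (chartAt (EuclideanSpace ℝ (Fin m)) q).source) (q' : M) :
    (chartVolume (m := m) q').restrict e.source ≤ (chartVolume (m := m) q).restrict e.source := by
  have hes : MeasurableSet e.source := e.open_source.measurableSet
  refine le_of_withDensity_le_withDensity h.isGaussMap.measurable_ofReal_inner
    (fun x => (ENNReal.ofReal_pos.2 (h.pos x)).ne') (fun x => ENNReal.ofReal_ne_top)
    (Measure.le_iff.2 fun T hT => ?_)
  rw [← restrict_withDensity hes, ← restrict_withDensity hes, Measure.restrict_apply hT,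
    Measure.restrict_apply hT, h.withDensity_chartVolume_apply he _ (hT.inter hes)
      inter_subset_right, h.withDensity_chartVolume_apply he _ (hT.inter hes) inter_subset_right]
  exact measure_mono (image_mono fun x hx => ⟨hx.1, hq hx.1.2⟩)

theorem graphMeasure_apply (h : IsTransversal b P ψ ν) (he : IsGraphChart P ψ e) {S : Set M}
    (hS : MeasurableSet S) (hSe : S ⊆ e.source) :
    graphMeasure m b ν S = volume ((fun x => P (ψ x)) '' S) := by
  obtain ⟨q, hq⟩ := he.exists_source_subset
  have hes : MeasurableSet e.source := e.open_source.measurableSet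
  have hvol : (riemannianVolume m M).restrict e.source =
      (chartVolume (m := m) q).restrict e.source :=
    iSup_measure_restrict_eq hes (h.restrict_chartVolume_le he hq)
  rw [← Measure.restrict_eq_self _ hSe, graphMeasure, restrict_withDensity hes, hvol,
    ← restrict_withDensity hes, Measure.restrict_eq_self _ hSe,
    h.withDensity_chartVolume_apply he q hS hSe, inter_eq_self_of_subset_left (hSe.trans hq)]

theorem graphMeasure_preimage_inter (h : IsTransversal b P ψ ν) (he : IsGraphChart P ψ e)
    {T : Set (EuclideanSpace ℝ (Fin m))} (hT : MeasurableSet T) :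
    graphMeasure m b ν ((fun x => P (ψ x)) ⁻¹' T ∩ e.source) = volume (T ∩ e.target) := by
  have hproj : Measurable fun x => P (ψ x) :=
    (P.continuous.comp h.isIsometricImmersion.contMDiff.continuous).measurable
  rw [h.graphMeasure_apply he ((hproj hT).inter e.open_source.measurableSet) inter_subset_right,
    image_preimage_inter, ← he.eqOn_proj.image_eq, e.image_source_eq_target]

theorem map_restrict_graphMeasure (h : IsTransversal b P ψ ν) (he : IsGraphChart P ψ e) :
    ((graphMeasure m b ν).restrict e.source).map (fun x => P (ψ x)) =
      volume.restrict e.target := by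
  have hproj : Measurable fun x => P (ψ x) :=
    (P.continuous.comp h.isIsometricImmersion.contMDiff.continuous).measurable
  ext T hT
  rw [Measure.map_apply hproj hT, Measure.restrict_apply (hproj hT), Measure.restrict_apply hT,
    h.graphMeasure_preimage_inter he hT]

end IsTransversal

end Volume

section LocallyLipschitz

section PseudoEMetric

variable {X Y Z : Type*} [PseudoEMetricSpace X] [PseudoEMetricSpace Y] [PseudoEMetricSpace Z]

theorem locallyLipschitzOn_comp {f : Y → Z} {g : X → Y} {s : Set X} (hf : LocallyLipschitz f)
    (hg : LocallyLipschitzOn s g) : LocallyLipschitzOn s fun x => f (g x) := by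
  intro x hx
  obtain ⟨Kg, t, ht, hgL⟩ := hg hx
  obtain ⟨Kf, u, hu, hfL⟩ := hf (g x)
  exact ⟨Kf * Kg, t ∩ g ⁻¹' u, inter_mem ht (hg.continuousOn x hx hu),
    hfL.comp (hgL.mono inter_subset_left) fun _ hz => hz.2⟩

theorem locallyLipschitz_mul {f g : X → ℝ} (hf : LocallyLipschitz f) (hg : LocallyLipschitz g) :
    LocallyLipschitz fun x => f x * g x :=
  have hmul : ContDiff ℝ 1 fun p : ℝ × ℝ => p.1 * p.2 := by fun_prop
  hmul.locallyLipschitz.comp (hf.prodMk hg)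

theorem locallyLipschitz_indicator [Zero Y] {f : X → Y} {U K : Set X} (hU : IsOpen U)
    (hK : IsClosed K) (hKU : K ⊆ U) (hf : LocallyLipschitzOn U f) (h0 : ∀ x ∈ U, x ∉ K → f x = 0) :
    LocallyLipschitz (U.indicator f) := by
  intro x
  by_cases hx : x ∈ U
  · obtain ⟨C, t, ht, hC⟩ := hf hx
    rw [hU.nhdsWithin_eq hx] at ht
    refine ⟨C, t ∩ U, inter_mem ht (hU.mem_nhds hx), fun y hy z hz => ?_⟩
    rw [indicator_of_mem hy.2, indicator_of_mem hz.2]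
    exact hC hy.1 hz.1
  · refine ⟨0, Kᶜ, hK.isOpen_compl.mem_nhds fun h => hx (hKU h), fun y hy z hz => ?_⟩
    have hzero (y : X) (hy : y ∉ K) : U.indicator f y = 0 :=
      indicator_apply_eq_zero.2 fun hyU => h0 y hyU hy
    simp [hzero y hy, hzero z hz]

end PseudoEMetric

theorem exists_lipschitzWith_of_hasCompactSupport {X : Type*} [PseudoMetricSpace X] [ProperSpace X]
    {g : X → ℝ} (hg : LocallyLipschitz g) (hc : HasCompactSupport g) :
    ∃ C : ℝ≥0, LipschitzWith C g := by
  obtain ⟨K, hK⟩ := (hg.locallyLipschitzOn (s := cthickening 1 (tsupport g)))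
    |>.exists_lipschitzOnWith_of_compact hc.isCompact.cthickening
  obtain ⟨B, hB⟩ := hg.continuous.bounded_above_of_compact_support hc
  have hnear {x y : X} (hx : x ∈ tsupport g) (hxy : dist x y ≤ 1) :
      dist (g x) (g y) ≤ K * dist x y :=
    hK.dist_le_mul x (self_subset_cthickening _ hx) y
      (mem_cthickening_of_dist_le y x 1 _ hx (dist_comm x y ▸ hxy))
  refine ⟨K + 2 * B.toNNReal, LipschitzWith.of_dist_le_mul fun x y => ?_⟩
  rw [NNReal.coe_add, NNReal.coe_mul, NNReal.coe_ofNat]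
  by_cases hxy : dist x y ≤ 1
  · suffices dist (g x) (g y) ≤ K * dist x y from
      this.trans (mul_le_mul_of_nonneg_right (by simp) dist_nonneg)
    by_cases hx : x ∈ tsupport g
    · exact hnear hx hxy
    by_cases hy : y ∈ tsupport g
    · rw [dist_comm (g x), dist_comm x]
      exact hnear hy (dist_comm x y ▸ hxy)
    · rw [image_eq_zero_of_notMem_tsupport hx, image_eq_zero_of_notMem_tsupport hy, dist_self]
      positivity
  · have hB' (x : X) : ‖g x‖ ≤ B.toNNReal := (hB x).trans (Real.le_coe_toNNReal B)
    calc dist (g x) (g y) ≤ B.toNNReal + B.toNNReal :=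
          (dist_le_norm_add_norm _ _).trans (add_le_add (hB' x) (hB' y))
      _ ≤ (K + 2 * B.toNNReal) * 1 := by linarith [K.coe_nonneg]
      _ ≤ (K + 2 * B.toNNReal) * dist x y :=
          mul_le_mul_of_nonneg_left (not_le.1 hxy).le (by positivity)

end LocallyLipschitz

section LogGradient

variable {m : ℕ} {M : Type*} [MetricSpace M] [ChartedSpace (EuclideanSpace ℝ (Fin m)) M]
  {b : EuclideanSpace ℝ (Fin (m + 1))}
  {P : EuclideanSpace ℝ (Fin (m + 1)) →L[ℝ] EuclideanSpace ℝ (Fin m)}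
  {ψ ν : M → EuclideanSpace ℝ (Fin (m + 1))}
  {e : OpenPartialHomeomorph M (EuclideanSpace ℝ (Fin m))}

theorem IsGraphChart.eventuallyEq_comp_symm_proj {Y : Type*} (he : IsGraphChart P ψ e) {x : M}
    (hx : x ∈ e.source) (f : M → Y) : f =ᶠ[𝓝 x] fun z => f (e.symm (P (ψ z))) := by
  filter_upwards [e.open_source.mem_nhds hx] with z hz
  rw [he.symm_proj hz]

theorem IsGraphChart.mdifferentiableAt_iff (he : IsGraphChart P ψ e)
    (hψ : ContMDiff (𝓡 m) 𝓘(ℝ, EuclideanSpace ℝ (Fin (m + 1))) ∞ ψ) {x : M} (hx : x ∈ e.source)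
    {f : M → ℝ} : MDifferentiableAt (𝓡 m) 𝓘(ℝ, ℝ) f x ↔
      DifferentiableAt ℝ (fun y => f (e.symm y)) (P (ψ x)) := by
  constructor <;> intro hf
  · rw [← he.symm_proj hx] at hf
    exact (hf.comp _ (he.mdifferentiableAt_symm (he.proj_mem_target hx))).differentiableAt
  · have hproj : MDifferentiableAt (𝓡 m) 𝓘(ℝ, EuclideanSpace ℝ (Fin m)) (fun z => P (ψ z)) x :=
      P.differentiableAt.mdifferentiableAt.comp x (hψ.mdifferentiableAt (by simp))
    have hcomp : MDifferentiableAt (𝓡 m) 𝓘(ℝ, ℝ) (fun z => f (e.symm (P (ψ z)))) x :=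
      hf.mdifferentiableAt.comp (g := fun y => f (e.symm y)) x hproj
    exact hcomp.congr_of_eventuallyEq (he.eventuallyEq_comp_symm_proj hx f)

variable [RiemannianBundle (fun x : M => TangentSpace (𝓡 m) x)]

/-- The gradient `u⁻¹ ∇u` of the logarithm of `u = ⟪b, ν⟫`. -/
def logGrad (b : EuclideanSpace ℝ (Fin (m + 1))) (ν : M → EuclideanSpace ℝ (Fin (m + 1))) (x : M) :
    TangentSpace (𝓡 m) x :=
  ⟪b, ν x⟫⁻¹ • ContinuousLinearMap.adjoint (diff ν x) b

theorem inner_logGrad (x : M) (v : TangentSpace (𝓡 m) x) :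
    ⟪logGrad b ν x, v⟫ = ⟪b, ν x⟫⁻¹ * ⟪b, diff ν x v⟫ := by
  rw [logGrad, real_inner_smul_left, ContinuousLinearMap.adjoint_inner_left]

/-- The derivative of a function in the direction of the gradient of `log ⟪b, ν⟫`. -/
def logGradDeriv (b : EuclideanSpace ℝ (Fin (m + 1))) (ν : M → EuclideanSpace ℝ (Fin (m + 1)))
    (f : M → ℝ) (x : M) : ℝ :=
  mfderiv (𝓡 m) 𝓘(ℝ, ℝ) f x (logGrad b ν x)

theorem logGradDeriv_eq_zero_of_notMem_tsupport {f : M → ℝ} {x : M} (hx : x ∉ tsupport f) :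
    logGradDeriv b ν f x = 0 := by
  rw [logGradDeriv, (notMem_tsupport_iff_eventuallyEq.1 hx).mfderiv_eq]
  exact DFunLike.congr_fun (mfderiv_const (c := (0 : ℝ))) _

namespace IsTransversal

theorem mfderiv_symm_gradField (h : IsTransversal b P ψ ν) (he : IsGraphChart P ψ e)
    {y : EuclideanSpace ℝ (Fin m)} (hy : y ∈ e.target) :
    mfderiv (𝓡 m) (𝓡 m) e.symm y (gradField P (fun z => ν (e.symm z)) y) =
      logGrad b ν (e.symm y) := by
  refine ext_inner_right ℝ fun v => ?_
  have hdiff := he.fderiv_comp_symm h.isIsometricImmersion.contMDiff hy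
    (gradField P (fun z => ν (e.symm z)) y)
  have hgrad := (h.isGraphParam he).inner_fderiv_normal_eq hy (P (diff ψ (e.symm y) v))
  rw [h.fderiv_normal_proj_diff he hy, h.fderiv_proj_diff he hy, hdiff] at hgrad
  rw [inner_logGrad, hgrad, inv_mul_cancel_left₀ (h.pos _).ne']
  exact (h.isIsometricImmersion.inner_diff _ _ _).symm

theorem fderiv_comp_symm_gradField (h : IsTransversal b P ψ ν) (he : IsGraphChart P ψ e) {x : M}
    (hx : x ∈ e.source) (f : M → ℝ) :
    fderiv ℝ (fun y => f (e.symm y)) (P (ψ x)) (gradField P (fun y => ν (e.symm y)) (P (ψ x))) =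
      logGradDeriv b ν f x := by
  obtain ⟨y, hy, rfl⟩ : ∃ y ∈ e.target, e.symm y = x :=
    ⟨P (ψ x), he.proj_mem_target hx, he.symm_proj hx⟩
  rw [he.proj_symm hy]
  by_cases hf : MDifferentiableAt (𝓡 m) 𝓘(ℝ, ℝ) f (e.symm y)
  · exact (fderiv_comp_apply_eq_mfderiv hf (he.mdifferentiableAt_symm hy) _).trans
      (congrArg (mfderiv (𝓡 m) 𝓘(ℝ, ℝ) f (e.symm y)) (h.mfderiv_symm_gradField he hy))
  · have hf' := (he.mdifferentiableAt_iff h.isIsometricImmersion.contMDiff hx).not.1 hf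
    rw [he.proj_symm hy] at hf'
    rw [logGradDeriv, mfderiv_zero_of_not_mdifferentiableAt hf,
      fderiv_zero_of_not_differentiableAt hf']
    rfl

end IsTransversal

end LogGradient

section ChartPullback

variable {X Y Z : Type*} [TopologicalSpace X] [TopologicalSpace Y] [Zero Z]
  (e : OpenPartialHomeomorph X Y) {f : X → Z}

theorem indicator_comp_symm_eq_zero {y : Y} (hy : y ∉ e '' tsupport f) :
    e.target.indicator (fun z => f (e.symm z)) y = 0 :=
  indicator_apply_eq_zero.2 fun hyt =>
    image_eq_zero_of_notMem_tsupport fun hsupp => hy ⟨_, hsupp, e.right_inv hyt⟩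

theorem isCompact_image_tsupport (hc : HasCompactSupport f) (hf : tsupport f ⊆ e.source) :
    IsCompact (e '' tsupport f) :=
  hc.isCompact.image_of_continuousOn (e.continuousOn.mono hf)

theorem hasCompactSupport_indicator_comp_symm [T2Space Y] (hc : HasCompactSupport f)
    (hf : tsupport f ⊆ e.source) :
    HasCompactSupport (e.target.indicator fun y => f (e.symm y)) :=
  .intro (isCompact_image_tsupport e hc hf) fun _ => indicator_comp_symm_eq_zero e

theorem tsupport_indicator_comp_symm_subset [T2Space Y] (hc : HasCompactSupport f)
    (hf : tsupport f ⊆ e.source) :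
    tsupport (e.target.indicator fun y => f (e.symm y)) ⊆ e.target :=
  calc tsupport (e.target.indicator fun y => f (e.symm y))
      ⊆ e '' tsupport f :=
        closure_minimal (Function.support_subset_iff'.2 fun _ => indicator_comp_symm_eq_zero e)
          (isCompact_image_tsupport e hc hf).isClosed
    _ ⊆ e.target := (image_mono hf).trans e.mapsTo.image_subset

end ChartPullback

section ChartRegularity

variable {m : ℕ} {M : Type*} [MetricSpace M] [ChartedSpace (EuclideanSpace ℝ (Fin m)) M]
  [RiemannianBundle (fun x : M => TangentSpace (𝓡 m) x)]
  [IsRiemannianManifold (𝓡 m) M]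
  {b : EuclideanSpace ℝ (Fin (m + 1))}
  {P : EuclideanSpace ℝ (Fin (m + 1)) →L[ℝ] EuclideanSpace ℝ (Fin m)}
  {ψ ν : M → EuclideanSpace ℝ (Fin (m + 1))}
  {e : OpenPartialHomeomorph M (EuclideanSpace ℝ (Fin m))}

theorem IsGraphChart.locallyLipschitzOn_symm (he : IsGraphChart P ψ e)
    (hψ : IsIsometricImmersion ψ) : LocallyLipschitzOn e.target e.symm := by
  intro y hy
  have hcont : ContinuousAt (fderiv ℝ fun z => ψ (e.symm z)) y :=
    ((he.contDiffOn_comp_symm hψ.contMDiff).continuousOn_fderiv_of_isOpen e.open_target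
      (by simp)).continuousAt (e.open_target.mem_nhds hy)
  obtain ⟨C, hC⟩ := exists_gt ‖fderiv ℝ (fun z => ψ (e.symm z)) y‖₊
  obtain ⟨r, hr, hball⟩ := Metric.eventually_nhds_iff_ball.1
    ((hcont.nnnorm.eventually_lt_const hC).and (e.open_target.eventually_mem hy))
  exact ⟨C, ball y r, mem_nhdsWithin_of_mem_nhds (ball_mem_nhds y hr),
    he.lipschitzOnWith_symm hψ (convex_ball y r) (fun z hz => (hball z hz).2)
      fun z hz => (hball z hz).1.le⟩

theorem IsGraphChart.exists_lipschitzWith_indicator (he : IsGraphChart P ψ e)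
    (hψ : IsIsometricImmersion ψ) {ζ : M → ℝ} (hζ : LocallyLipschitz ζ) (hc : HasCompactSupport ζ)
    (hsub : tsupport ζ ⊆ e.source) :
    ∃ C : ℝ≥0, LipschitzWith C (e.target.indicator fun y => ζ (e.symm y)) := by
  refine exists_lipschitzWith_of_hasCompactSupport ?_
    (hasCompactSupport_indicator_comp_symm e hc hsub)
  exact locallyLipschitz_indicator e.open_target (isCompact_image_tsupport e hc hsub).isClosed
    ((image_mono hsub).trans e.mapsTo.image_subset)
    (locallyLipschitzOn_comp hζ (he.locallyLipschitzOn_symm hψ))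
    fun y hy hyK => (indicator_of_mem hy _).symm.trans (indicator_comp_symm_eq_zero e hyK)

theorem IsTransversal.locallyLipschitz_of_contMDiff [IsManifold (𝓡 m) ∞ M]
    (h : IsTransversal b P ψ ν) {f : M → ℝ} (hf : ContMDiff (𝓡 m) 𝓘(ℝ, ℝ) ∞ f) :
    LocallyLipschitz f := by
  intro x
  obtain ⟨e, he, hx⟩ := h.exists_isGraphChart x
  have hproj : LipschitzWith (‖P‖₊ * 1) fun z => P (ψ z) :=
    P.lipschitz.comp h.isIsometricImmersion.lipschitzWith
  obtain ⟨C, t, ht, hC⟩ := (((he.contDiffOn_comp_symm hf).contDiffAt (e.open_target.mem_nhds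
    (he.proj_mem_target hx))).of_le (by simp)).exists_lipschitzOnWith
  refine ⟨C * (‖P‖₊ * 1), (fun z => P (ψ z)) ⁻¹' t ∩ e.source,
    inter_mem (hproj.continuous.continuousAt ht) (e.open_source.mem_nhds hx), ?_⟩
  intro y hy z hz
  have hcomp := hC.comp hproj.lipschitzOnWith (fun z hz => hz.1) hy hz
  simpa only [Function.comp_apply, he.symm_proj hy.2, he.symm_proj hz.2] using hcomp

end ChartRegularity

section GraphMeasure

variable {m : ℕ} {M : Type*} [MetricSpace M] [ChartedSpace (EuclideanSpace ℝ (Fin m)) M]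
  [RiemannianBundle (fun x : M => TangentSpace (𝓡 m) x)]
  {b : EuclideanSpace ℝ (Fin (m + 1))}
  {P : EuclideanSpace ℝ (Fin (m + 1)) →L[ℝ] EuclideanSpace ℝ (Fin m)}
  {ψ ν : M → EuclideanSpace ℝ (Fin (m + 1))}
  {e : OpenPartialHomeomorph M (EuclideanSpace ℝ (Fin m))}

namespace IsTransversal

theorem continuous_proj (h : IsTransversal b P ψ ν) : Continuous fun x => P (ψ x) :=
  P.continuous.comp h.isIsometricImmersion.contMDiff.continuous

variable [IsManifold (𝓡 m) ∞ M] [MeasurableSpace M] [BorelSpace M]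

theorem measurePreserving_proj (h : IsTransversal b P ψ ν) (he : IsGraphChart P ψ e) :
    MeasurePreserving (fun x => P (ψ x)) ((graphMeasure m b ν).restrict e.source)
      (volume.restrict e.target) :=
  ⟨h.continuous_proj.measurable, h.map_restrict_graphMeasure he⟩

theorem integral_graphMeasure_eq (h : IsTransversal b P ψ ν) (he : IsGraphChart P ψ e) {k : M → ℝ}
    {κ : EuclideanSpace ℝ (Fin m) → ℝ} (hk : ∀ x, x ∉ e.source → k x = 0)
    (hκ : ∀ y, y ∉ e.target → κ y = 0) (heq : ∀ y ∈ e.target, κ y = k (e.symm y))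
    (hi : Integrable κ) :
    Integrable k (graphMeasure m b ν) ∧ ∫ x, k x ∂(graphMeasure m b ν) = ∫ y, κ y := by
  have hmp := h.measurePreserving_proj he
  have hae : (fun x => κ (P (ψ x))) =ᵐ[(graphMeasure m b ν).restrict e.source] k := by
    filter_upwards [ae_restrict_mem e.open_source.measurableSet] with x hx
    rw [heq _ (he.proj_mem_target hx), he.symm_proj hx]
  constructor
  · have hk_on : IntegrableOn k e.source (graphMeasure m b ν) :=
      (hmp.integrable_comp_of_integrable hi.restrict).congr hae
    exact (integrableOn_iff_integrable_of_support_subset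
      (Function.support_subset_iff'.2 hk)).1 hk_on
  · rw [← setIntegral_eq_integral_of_forall_compl_eq_zero hk, ← integral_congr_ae hae,
      ← setIntegral_eq_integral_of_forall_compl_eq_zero hκ, ← hmp.map_eq,
      integral_map hmp.aemeasurable (hmp.map_eq.symm ▸ hi.restrict.aestronglyMeasurable)]

theorem isLocallyFiniteMeasure_graphMeasure (h : IsTransversal b P ψ ν) :
    IsLocallyFiniteMeasure (graphMeasure m b ν) := by
  refine ⟨fun x => ?_⟩
  obtain ⟨e, he, hx⟩ := h.exists_isGraphChart x
  refine ⟨(fun x => P (ψ x)) ⁻¹' ball (P (ψ x)) 1 ∩ e.source,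
    inter_mem (h.continuous_proj.continuousAt.preimage_mem_nhds (ball_mem_nhds _ one_pos))
      (e.open_source.mem_nhds hx), ?_⟩
  rw [h.graphMeasure_preimage_inter he measurableSet_ball]
  exact (measure_mono inter_subset_left).trans_lt measure_ball_lt_top

theorem isOpenPosMeasure_graphMeasure (h : IsTransversal b P ψ ν) :
    (graphMeasure m b ν).IsOpenPosMeasure := by
  refine ⟨fun U hU ⟨x, hx⟩ h0 => ?_⟩
  obtain ⟨e, he, hxe⟩ := h.exists_isGraphChart x
  have hV : IsOpen (e.target ∩ e.symm ⁻¹' U) := e.isOpen_inter_preimage_symm hU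
  have hsub : (fun x => P (ψ x)) ⁻¹' (e.target ∩ e.symm ⁻¹' U) ∩ e.source ⊆ U := by
    rintro z ⟨⟨_, hz⟩, hze⟩
    rwa [mem_preimage, he.symm_proj hze] at hz
  have hmem : P (ψ x) ∈ (e.target ∩ e.symm ⁻¹' U) ∩ e.target :=
    ⟨⟨he.proj_mem_target hxe, by rwa [mem_preimage, he.symm_proj hxe]⟩, he.proj_mem_target hxe⟩
  refine (hV.inter e.open_target).measure_ne_zero volume ⟨_, hmem⟩ ?_
  rw [← h.graphMeasure_preimage_inter he hV.measurableSet]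
  exact measure_mono_null hsub h0

theorem measure_proj_preimage_inter_null (h : IsTransversal b P ψ ν) (he : IsGraphChart P ψ e)
    {T : Set (EuclideanSpace ℝ (Fin m))} (hT : volume T = 0) :
    graphMeasure m b ν ((fun x => P (ψ x)) ⁻¹' T ∩ e.source) = 0 := by
  obtain ⟨T', hTT', hmeas, hT'⟩ := exists_measurable_superset_of_null hT
  refine measure_mono_null (inter_subset_inter_left _ (preimage_mono hTT')) ?_
  rw [h.graphMeasure_preimage_inter he hmeas]
  exact measure_mono_null inter_subset_left hT'

theorem ae_mdifferentiableAt [IsRiemannianManifold (𝓡 m) M] [SecondCountableTopology M]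
    (h : IsTransversal b P ψ ν) {ζ : M → ℝ} (hζ : LocallyLipschitz ζ) :
    ∀ᵐ x ∂(graphMeasure m b ν), MDifferentiableAt (𝓡 m) 𝓘(ℝ, ℝ) ζ x := by
  rw [ae_iff]
  refine measure_null_of_locally_null _ fun x _ => ?_
  obtain ⟨e, he, hx⟩ := h.exists_isGraphChart x
  have hψ := h.isIsometricImmersion
  have hxt := he.proj_mem_target hx
  obtain ⟨K, t, ht, hLip⟩ := locallyLipschitzOn_comp hζ (he.locallyLipschitzOn_symm hψ) hxt
  rw [e.open_target.nhdsWithin_eq hxt] at ht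
  obtain ⟨U, hUt, hUo, hxU⟩ := _root_.mem_nhds_iff.1 ht
  have hnull : volume {y | ¬ (y ∈ U → DifferentiableAt ℝ (fun y => ζ (e.symm y)) y)} = 0 := by
    refine ae_iff.1 ?_
    filter_upwards [(hLip.mono hUt).ae_differentiableWithinAt_of_mem (μ := volume)] with y hy hyU
    exact (hy hyU).differentiableAt (hUo.mem_nhds hyU)
  refine ⟨_, inter_mem_nhdsWithin _ (inter_mem
    (h.continuous_proj.continuousAt.preimage_mem_nhds (hUo.mem_nhds hxU))
    (e.open_source.mem_nhds hx)), ?_⟩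
  refine measure_mono_null ?_ (h.measure_proj_preimage_inter_null he hnull)
  rintro z ⟨hz, hzU, hze⟩
  exact ⟨fun hd => hz ((he.mdifferentiableAt_iff hψ.contMDiff hze).2 (hd hzU)), hze⟩

end IsTransversal

end GraphMeasure

section WeakEquation

theorem exists_finset_sum_mul_eq {E H X : Type*} [NormedAddCommGroup E] [NormedSpace ℝ E]
    [TopologicalSpace H] {I : ModelWithCorners ℝ E H} [TopologicalSpace X] [ChartedSpace H X]
    {ι : Type*} (f : SmoothPartitionOfUnity ι I X univ) {ζ : X → ℝ} (hc : HasCompactSupport ζ) :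
    ∃ s : Finset ι, ∀ x, ∑ i ∈ s, f i x * ζ x = ζ x := by
  have hfin := f.locallyFinite.finite_nonempty_inter_compact hc.isCompact
  refine ⟨hfin.toFinset, fun x => ?_⟩
  by_cases hx : x ∈ tsupport ζ
  · have hsum : ∑ i ∈ hfin.toFinset, f i x = 1 := by
      rw [← f.sum_eq_one (mem_univ x)]
      refine (finsum_eq_sum_of_support_subset _ fun i hi => ?_).symm
      rw [Finite.coe_toFinset]
      exact ⟨x, hi, hx⟩
    rw [← Finset.sum_mul, hsum, one_mul]
  · simp [image_eq_zero_of_notMem_tsupport hx]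

variable {m : ℕ} {M : Type*} [MetricSpace M] [ChartedSpace (EuclideanSpace ℝ (Fin m)) M]
  [RiemannianBundle (fun x : M => TangentSpace (𝓡 m) x)]
  {b : EuclideanSpace ℝ (Fin (m + 1))}
  {P : EuclideanSpace ℝ (Fin (m + 1)) →L[ℝ] EuclideanSpace ℝ (Fin m)}
  {ψ ν : M → EuclideanSpace ℝ (Fin (m + 1))} {c : ℝ} {ζ : M → ℝ}
  {e : OpenPartialHomeomorph M (EuclideanSpace ℝ (Fin m))}

theorem IsTransversal.logGradDeriv_finset_sum [IsManifold (𝓡 m) ∞ M]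
    (h : IsTransversal b P ψ ν) {ι : Type*} {s : Finset ι} {η : ι → M → ℝ} {x : M}
    (hη : ∀ i ∈ s, MDifferentiableAt (𝓡 m) 𝓘(ℝ, ℝ) (η i) x) :
    logGradDeriv b ν (fun z => ∑ i ∈ s, η i z) x = ∑ i ∈ s, logGradDeriv b ν (η i) x := by
  obtain ⟨e, he, hx⟩ := h.exists_isGraphChart x
  simp only [← h.fderiv_comp_symm_gradField he hx]
  rw [fderiv_fun_sum fun i hi =>
      (he.mdifferentiableAt_iff h.isIsometricImmersion.contMDiff hx).1 (hη i hi),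
    _root_.sum_apply]

variable [MeasurableSpace M]

/-- The equation `div (w ∇u) = -|A|² u w` for `u = ⟪b, ν⟫` and the weight `w = e^{c|ψ|²/2}`, tested
against `ζ`. Both integrands contain the factor `u`, which is the density of `graphMeasure`. -/
structure WeakJacobiEq (c : ℝ) (b : EuclideanSpace ℝ (Fin (m + 1)))
    (ψ ν : M → EuclideanSpace ℝ (Fin (m + 1))) (ζ : M → ℝ) : Prop where
  integrable_logGradDeriv :
    Integrable (fun x => gaussWeight c (ψ x) * logGradDeriv b ν ζ x) (graphMeasure m b ν)
  integrable_normA_sq :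
    Integrable (fun x => ζ x * (gaussWeight c (ψ x) * normA ψ ν x ^ 2)) (graphMeasure m b ν)
  integral_eq : ∫ x, gaussWeight c (ψ x) * logGradDeriv b ν ζ x ∂(graphMeasure m b ν) =
    ∫ x, ζ x * (gaussWeight c (ψ x) * normA ψ ν x ^ 2) ∂(graphMeasure m b ν)

theorem WeakJacobiEq.finset_sum {ι : Type*} {s : Finset ι} {η : ι → M → ℝ}
    (hη : ∀ i ∈ s, WeakJacobiEq c b ψ ν (η i)) (hζ : ∀ x, ∑ i ∈ s, η i x = ζ x)
    (hderiv : ∀ᵐ x ∂(graphMeasure m b ν),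
      ∑ i ∈ s, logGradDeriv b ν (η i) x = logGradDeriv b ν ζ x) : WeakJacobiEq c b ψ ν ζ := by
  have hleft : (fun x => ∑ i ∈ s, gaussWeight c (ψ x) * logGradDeriv b ν (η i) x)
      =ᵐ[graphMeasure m b ν] fun x => gaussWeight c (ψ x) * logGradDeriv b ν ζ x := by
    filter_upwards [hderiv] with x hx
    rw [← Finset.mul_sum, hx]
  have hright : (fun x => ∑ i ∈ s, η i x * (gaussWeight c (ψ x) * normA ψ ν x ^ 2)) =
      fun x => ζ x * (gaussWeight c (ψ x) * normA ψ ν x ^ 2) :=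
    funext fun x => by rw [← Finset.sum_mul, hζ x]
  refine ⟨(integrable_finsetSum s fun i hi => (hη i hi).integrable_logGradDeriv).congr hleft,
    hright ▸ integrable_finsetSum s fun i hi => (hη i hi).integrable_normA_sq, ?_⟩
  rw [← integral_congr_ae hleft, ← hright,
    integral_finsetSum s fun i hi => (hη i hi).integrable_logGradDeriv,
    integral_finsetSum s fun i hi => (hη i hi).integrable_normA_sq]
  exact Finset.sum_congr rfl fun i hi => (hη i hi).integral_eq

variable [IsManifold (𝓡 m) ∞ M] [BorelSpace M] [IsRiemannianManifold (𝓡 m) M]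

namespace IsTransversal

theorem weakJacobiEq_of_tsupport_subset (h : IsTransversal b P ψ ν) (hsol : IsSoliton ψ ν c)
    (he : IsGraphChart P ψ e) (hζ : LocallyLipschitz ζ) (hc : HasCompactSupport ζ)
    (hsub : tsupport ζ ⊆ e.source) : WeakJacobiEq c b ψ ν ζ := by
  have hparam := h.isGraphParam he
  obtain ⟨C, hLip⟩ := he.exists_lipschitzWith_indicator h.isIsometricImmersion hζ hc hsub
  have hsupp := tsupport_indicator_comp_symm_subset e hc hsub
  obtain ⟨hint_deriv, hint_div, heq⟩ := integral_fderiv_apply_eq_neg e.open_target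
    ((hparam.contDiffOn_gaussWeight_smul_gradField (c := c)).of_le (by simp)) hLip
    (hasCompactSupport_indicator_comp_symm e hc hsub) hsupp
  have hζ0 {x : M} (hx : x ∉ e.source) : x ∉ tsupport ζ := fun hxs => hx (hsub hxs)
  obtain ⟨hint_left, hleft⟩ := h.integral_graphMeasure_eq he
    (k := fun x => gaussWeight c (ψ x) * logGradDeriv b ν ζ x)
    (fun x hx => by rw [logGradDeriv_eq_zero_of_notMem_tsupport (hζ0 hx), mul_zero])
    (fun y hy => by
      rw [fderiv_eq_zero_of_notMem_tsupport fun hys => hy (hsupp hys), zero_apply])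
    (fun y hy => by
      have hnear : e.target.indicator (fun y => ζ (e.symm y)) =ᶠ[𝓝 y] fun y => ζ (e.symm y) := by
        filter_upwards [e.open_target.mem_nhds hy] with z hz using indicator_of_mem hz _
      rw [hnear.fderiv_eq, map_smul, smul_eq_mul,
        ← h.fderiv_comp_symm_gradField he (e.map_target hy), he.proj_symm hy])
    hint_deriv
  obtain ⟨hint_right, hright⟩ := h.integral_graphMeasure_eq he
    (k := fun x => ζ x * (gaussWeight c (ψ x) * normA ψ ν x ^ 2))
    (fun x hx => by rw [image_eq_zero_of_notMem_tsupport (hζ0 hx), zero_mul])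
    (fun y hy => by rw [Pi.neg_apply, indicator_of_notMem hy, zero_mul, neg_zero])
    (fun y hy => by
      rw [Pi.neg_apply, indicator_of_mem hy, hparam.divergence_gaussWeight_smul_gradField
          (fun z hz => h.trace_gaussOp_eq hsol he hz) hy,
        h.trace_gaussOp_comp_self_eq_normA_sq he hy, mul_neg, neg_neg])
    hint_div.neg
  exact ⟨hint_left, hint_right, by rw [hleft, hright, heq]; exact (integral_neg _).symm⟩

theorem weakJacobiEq [SigmaCompactSpace M] (h : IsTransversal b P ψ ν) (hsol : IsSoliton ψ ν c)
    (hζ : LocallyLipschitz ζ) (hc : HasCompactSupport ζ) : WeakJacobiEq c b ψ ν ζ := by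
  choose E hE hxE using h.exists_isGraphChart
  obtain ⟨f, hf⟩ := SmoothPartitionOfUnity.exists_isSubordinate (𝓡 m) isClosed_univ
    (fun x => (E x).source) (fun x => (E x).open_source) fun x _ => mem_iUnion.2 ⟨x, hxE x⟩
  obtain ⟨s, hs⟩ := exists_finset_sum_mul_eq f hc
  have hη (i : M) : LocallyLipschitz fun x => f i x * ζ x :=
    locallyLipschitz_mul (h.locallyLipschitz_of_contMDiff (f i).contMDiff) hζ
  refine WeakJacobiEq.finset_sum (s := s) (fun i _ => h.weakJacobiEq_of_tsupport_subset hsol (hE i)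
    (hη i) hc.mul_left ((tsupport_mul_subset_left).trans (hf i))) hs ?_
  have hae : ∀ᵐ x ∂(graphMeasure m b ν), ∀ i ∈ s,
      MDifferentiableAt (𝓡 m) 𝓘(ℝ, ℝ) (fun z => f i z * ζ z) x :=
    (Finset.eventually_all s).2 fun i _ => h.ae_mdifferentiableAt (hη i)
  filter_upwards [hae] with x hx
  rw [← h.logGradDeriv_finset_sum hx, funext hs]

end IsTransversal

end WeakEquation

section LipschitzGradient

variable {m : ℕ} {M : Type*} [MetricSpace M] [ChartedSpace (EuclideanSpace ℝ (Fin m)) M]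
  [RiemannianBundle (fun x : M => TangentSpace (𝓡 m) x)] [IsRiemannianManifold (𝓡 m) M]
  {b : EuclideanSpace ℝ (Fin (m + 1))}
  {P : EuclideanSpace ℝ (Fin (m + 1)) →L[ℝ] EuclideanSpace ℝ (Fin m)}
  {ψ ν : M → EuclideanSpace ℝ (Fin (m + 1))}
  {e : OpenPartialHomeomorph M (EuclideanSpace ℝ (Fin m))} {y v : EuclideanSpace ℝ (Fin m)} {C : ℝ}

theorem IsGraphChart.eventually_dist_symm_le (he : IsGraphChart P ψ e)
    (hψ : IsIsometricImmersion ψ) (hy : y ∈ e.target)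
    (hC : ‖fderiv ℝ (fun y => ψ (e.symm y)) y v‖ < C) :
    ∀ᶠ t in 𝓝 (0 : ℝ), dist (e.symm y) (e.symm (y + t • v)) ≤ C * |t| := by
  have hsmooth : ContDiffAt ℝ ∞ (fun y => ψ (e.symm y)) y :=
    (he.contDiffOn_comp_symm hψ.contMDiff).contDiffAt (e.open_target.mem_nhds hy)
  have hcont : ContinuousAt (fun z => fderiv ℝ (fun y => ψ (e.symm y)) z v) y :=
    (hsmooth.fderiv_right (m := ∞) (by simp)).continuousAt.clm_apply continuousAt_const
  obtain ⟨r, hr, hball⟩ := Metric.eventually_nhds_iff_ball.1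
    ((hcont.norm.eventually_lt_const hC).and (e.open_target.mem_nhds hy))
  have hline : ∀ᶠ t in 𝓝 (0 : ℝ), y + t • v ∈ ball y r := by
    have hc : ContinuousAt (fun t : ℝ => y + t • v) 0 := by fun_prop
    exact hc.eventually_mem (by simpa using ball_mem_nhds y hr)
  filter_upwards [hline] with t ht
  have hseg (s : ℝ) (hs : s ∈ Icc (0 : ℝ) 1) : y + s • t • v ∈ ball y r := by
    simpa using (convex_ball y r).add_smul_sub_mem (mem_ball_self hr) ht hs
  refine he.dist_symm_le hψ (fun s hs => (hball _ (hseg s hs)).2) fun s hs => ?_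
  rw [map_smul, norm_smul, Real.norm_eq_abs, mul_comm C]
  exact mul_le_mul_of_nonneg_left (hball _ (hseg s hs)).1.le (abs_nonneg t)

variable {L : ℝ≥0} {φ : M → ℝ}

theorem IsGraphChart.abs_fderiv_comp_symm_le (he : IsGraphChart P ψ e)
    (hψ : IsIsometricImmersion ψ) (hy : y ∈ e.target) (hφ : LipschitzWith L φ)
    (hd : DifferentiableAt ℝ (fun y => φ (e.symm y)) y) (v : EuclideanSpace ℝ (Fin m)) :
    |fderiv ℝ (fun y => φ (e.symm y)) y v| ≤ L * ‖fderiv ℝ (fun y => ψ (e.symm y)) y v‖ := by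
  have hderiv : HasDerivAt (fun t : ℝ => φ (e.symm (y + t • v)))
      (fderiv ℝ (fun y => φ (e.symm y)) y v) 0 := hd.hasFDerivAt.hasLineDerivAt v
  have hbound : ∀ C > ‖fderiv ℝ (fun y => ψ (e.symm y)) y v‖,
      |fderiv ℝ (fun y => φ (e.symm y)) y v| ≤ L * C := by
    intro C hC
    have hC0 : 0 ≤ C := (norm_nonneg _).trans hC.le
    have hlip : ∀ᶠ t in 𝓝 (0 : ℝ), ‖φ (e.symm (y + t • v)) - φ (e.symm (y + (0 : ℝ) • v))‖
        ≤ L * C * ‖t - 0‖ := by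
      filter_upwards [he.eventually_dist_symm_le hψ hy hC] with t ht
      rw [zero_smul, add_zero, sub_zero, ← dist_eq_norm, Real.norm_eq_abs, mul_assoc, dist_comm]
      exact (hφ.dist_le_mul _ _).trans (mul_le_mul_of_nonneg_left ht L.coe_nonneg)
    simpa using hderiv.hasFDerivAt.le_of_lip' (mul_nonneg L.coe_nonneg hC0) hlip
  refine ge_of_tendsto (x := 𝓝[>] ‖fderiv ℝ (fun y => ψ (e.symm y)) y v‖)
    (tendsto_nhdsWithin_of_tendsto_nhds (tendsto_id.const_mul (L : ℝ))) ?_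
  filter_upwards [self_mem_nhdsWithin] with C hC using hbound C hC

theorem IsTransversal.abs_logGradDeriv_le [IsManifold (𝓡 m) ∞ M] (h : IsTransversal b P ψ ν)
    (hφ : LipschitzWith L φ) {x : M} (hd : MDifferentiableAt (𝓡 m) 𝓘(ℝ, ℝ) φ x) :
    |logGradDeriv b ν φ x| ≤ L * ‖logGrad b ν x‖ := by
  have hψ := h.isIsometricImmersion
  obtain ⟨e, he, hx⟩ := h.exists_isGraphChart x
  have hy := he.proj_mem_target hx
  set Y := gradField P (fun y => ν (e.symm y)) (P (ψ x))
  have hnorm : ‖fderiv ℝ (fun y => ψ (e.symm y)) (P (ψ x)) Y‖ =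
      ‖logGrad b ν (e.symm (P (ψ x)))‖ := by
    rw [he.fderiv_comp_symm hψ.contMDiff hy]
    exact (congrArg (fun t => ‖diff ψ (e.symm (P (ψ x))) t‖) (h.mfderiv_symm_gradField he hy)).trans
      (hψ.norm_diff _ _)
  have hle := he.abs_fderiv_comp_symm_le hψ hy hφ
    ((he.mdifferentiableAt_iff hψ.contMDiff hx).1 hd) Y
  rwa [h.fderiv_comp_symm_gradField he hx, hnorm, he.symm_proj hx] at hle

end LipschitzGradient

section Caccioppoli

theorem exists_lipschitzWith_cutoff {X : Type*} [PseudoMetricSpace X] {δ : ℝ} (hδ : 0 < δ) (o : X)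
    (R : ℝ) : ∃ φ : X → ℝ, LipschitzWith δ.toNNReal⁻¹ φ ∧ (∀ x ∈ ball o R, φ x = 1) ∧
      Function.support φ ⊆ ball o (R + δ) := by
  refine ⟨fun x => thickenedIndicator hδ (ball o R) x, lipschitzWith_thickenedIndicator hδ _,
    fun x hx => by simp [thickenedIndicator_one hδ _ hx],
    Function.support_subset_iff'.2 fun x hx => ?_⟩
  have hx' : x ∉ thickening δ (ball o R) := fun hmem =>
    hx (add_comm δ R ▸ thickening_ball o δ R hmem)
  simp [thickenedIndicator_zero hδ _ hx']

variable {m : ℕ} {M : Type*} [MetricSpace M] [ChartedSpace (EuclideanSpace ℝ (Fin m)) M]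
  {c : ℝ} {b : EuclideanSpace ℝ (Fin (m + 1))}
  {P : EuclideanSpace ℝ (Fin (m + 1)) →L[ℝ] EuclideanSpace ℝ (Fin m)}
  {ψ ν : M → EuclideanSpace ℝ (Fin (m + 1))} {x : M}

/-- The density with respect to `graphMeasure` of the energy `∫ (1 - u)² e^{c|ψ|²/2} dvol`, where
`u = ⟪b, ν⟫`, which measures how far `ν` is from `b`. -/
def tiltDensity (c : ℝ) (b : EuclideanSpace ℝ (Fin (m + 1)))
    (ψ ν : M → EuclideanSpace ℝ (Fin (m + 1))) (x : M) : ℝ :=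
  (1 - ⟪b, ν x⟫) ^ 2 / ⟪b, ν x⟫ * gaussWeight c (ψ x)

theorem two_mul_mul_mul_sub_le_of_abs_le {u p d g L : ℝ} (hu : 0 < u) (hd : |d| ≤ L * g) :
    2 * p * (1 - u) * d - p ^ 2 * (u * g ^ 2) ≤ L ^ 2 * ((1 - u) ^ 2 / u) := by
  have hamgm : 2 * (|p| * g) * (L * |1 - u|) ≤ u * (|p| * g) ^ 2 + (L * |1 - u|) ^ 2 / u := by
    have hsq : 0 ≤ (u * (|p| * g) - L * |1 - u|) ^ 2 / u := by positivity
    have heq : (u * (|p| * g) - L * |1 - u|) ^ 2 / u =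
        u * (|p| * g) ^ 2 + (L * |1 - u|) ^ 2 / u - 2 * (|p| * g) * (L * |1 - u|) := by
      field_simp
      ring
    linarith
  have hle : 2 * p * (1 - u) * d ≤ 2 * (|p| * g) * (L * |1 - u|) :=
    calc 2 * p * (1 - u) * d ≤ |2 * p * (1 - u) * d| := le_abs_self _
      _ = 2 * |p| * |1 - u| * |d| := by rw [abs_mul, abs_mul, abs_mul, abs_two]
      _ ≤ 2 * |p| * |1 - u| * (L * g) := by gcongr
      _ = 2 * (|p| * g) * (L * |1 - u|) := by ring
  simp only [mul_pow, sq_abs] at hamgm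
  rw [mul_div_assoc] at hamgm
  linarith

variable [RiemannianBundle (fun x : M => TangentSpace (𝓡 m) x)]

theorem logGradDeriv_mul {f g : M → ℝ} (hf : MDifferentiableAt (𝓡 m) 𝓘(ℝ, ℝ) f x)
    (hg : MDifferentiableAt (𝓡 m) 𝓘(ℝ, ℝ) g x) :
    logGradDeriv b ν (fun z => f z * g z) x =
      f x * logGradDeriv b ν g x + g x * logGradDeriv b ν f x :=
  DFunLike.congr_fun (hf.hasMFDerivAt.mul hg.hasMFDerivAt).mfderiv (logGrad b ν x)

theorem logGradDeriv_one_sub_inner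
    (hν : MDifferentiableAt (𝓡 m) 𝓘(ℝ, EuclideanSpace ℝ (Fin (m + 1))) ν x)
    (hu : ⟪b, ν x⟫ ≠ 0) :
    logGradDeriv b ν (fun z => 1 - ⟪b, ν z⟫) x = -(⟪b, ν x⟫ * ‖logGrad b ν x‖ ^ 2) := by
  have hderiv : HasFDerivAt (fun z => 1 - ⟪b, z⟫) (-innerSL ℝ b) (ν x) :=
    (innerSL ℝ b).hasFDerivAt.const_sub 1
  have hcomp : logGradDeriv b ν (fun z => 1 - ⟪b, ν z⟫) x =
      -⟪b, diff ν x (logGrad b ν x)⟫ :=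
    DFunLike.congr_fun (hderiv.hasMFDerivAt.comp x hν.hasMFDerivAt).mfderiv (logGrad b ν x)
  rw [hcomp, ← real_inner_self_eq_norm_sq, inner_logGrad, mul_inv_cancel_left₀ hu]

namespace IsTransversal

theorem inner_le_one (h : IsTransversal b P ψ ν) (x : M) : ⟪b, ν x⟫ ≤ 1 := by
  simpa [h.isHorizontalProj.norm_eq_one, h.isGaussMap.norm_eq_one] using real_inner_le_norm b (ν x)

theorem tiltDensity_nonneg (h : IsTransversal b P ψ ν) (x : M) : 0 ≤ tiltDensity c b ψ ν x :=
  mul_nonneg (div_nonneg (sq_nonneg _) (h.pos x).le) (gaussWeight_pos c _).le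

theorem inner_mul_tiltDensity (h : IsTransversal b P ψ ν) (x : M) :
    ⟪b, ν x⟫ * tiltDensity c b ψ ν x = (1 - ⟪b, ν x⟫) ^ 2 * gaussWeight c (ψ x) := by
  rw [tiltDensity, ← mul_assoc, mul_div_cancel₀ _ (h.pos x).ne']

theorem eq_of_tiltDensity_eq_zero (h : IsTransversal b P ψ ν) (hx : tiltDensity c b ψ ν x = 0) :
    ν x = b := by
  have hmul := h.inner_mul_tiltDensity (c := c) x
  rw [hx, mul_zero, zero_eq_mul, or_iff_left (gaussWeight_pos c _).ne', sq_eq_zero_iff,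
    sub_eq_zero] at hmul
  exact ((inner_eq_one_iff_of_norm_eq_one (𝕜 := ℝ) h.isHorizontalProj.norm_eq_one
    (h.isGaussMap.norm_eq_one x)).1 hmul.symm).symm

theorem tiltDensity_le (h : IsTransversal b P ψ ν) (hv : 1 / (1 + normA ψ ν x ^ 2) ≤ ⟪b, ν x⟫) :
    tiltDensity c b ψ ν x ≤ (1 - ⟪b, ν x⟫) * (gaussWeight c (ψ x) * normA ψ ν x ^ 2) := by
  have hnormA : (1 - ⟪b, ν x⟫) / ⟪b, ν x⟫ ≤ normA ψ ν x ^ 2 := by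
    rw [div_le_iff₀ (by positivity)] at hv
    rw [div_le_iff₀ (h.pos x)]
    linarith
  have hw := gaussWeight_pos c (ψ x)
  have hu := sub_nonneg.2 (h.inner_le_one x)
  calc tiltDensity c b ψ ν x
      = (1 - ⟪b, ν x⟫) * (gaussWeight c (ψ x) * ((1 - ⟪b, ν x⟫) / ⟪b, ν x⟫)) := by
        rw [tiltDensity]; ring
    _ ≤ (1 - ⟪b, ν x⟫) * (gaussWeight c (ψ x) * normA ψ ν x ^ 2) := by gcongr

theorem continuous_inner (h : IsTransversal b P ψ ν) : Continuous fun x => ⟪b, ν x⟫ :=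
  continuous_const.inner h.isGaussMap.contMDiff.continuous

theorem continuous_tiltDensity (h : IsTransversal b P ψ ν) : Continuous (tiltDensity c b ψ ν) :=
  (((continuous_const.sub h.continuous_inner).pow 2).div h.continuous_inner
    fun x => (h.pos x).ne').mul
    ((contDiff_gaussWeight c).continuous.comp h.isIsometricImmersion.contMDiff.continuous)

variable [IsManifold (𝓡 m) ∞ M] {L : ℝ≥0} {φ : M → ℝ}

theorem gaussWeight_mul_logGradDeriv_le [IsRiemannianManifold (𝓡 m) M] (h : IsTransversal b P ψ ν)
    (hφ : LipschitzWith L φ) (hd : MDifferentiableAt (𝓡 m) 𝓘(ℝ, ℝ) φ x) :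
    gaussWeight c (ψ x) * logGradDeriv b ν (fun z => φ z * φ z * (1 - ⟪b, ν z⟫)) x ≤
      (Function.support φ).indicator (fun z => L ^ 2 * tiltDensity c b ψ ν z) x := by
  have hν : MDifferentiableAt (𝓡 m) 𝓘(ℝ, EuclideanSpace ℝ (Fin (m + 1))) ν x :=
    h.isGaussMap.contMDiff.mdifferentiableAt (by simp)
  have hsub : DifferentiableAt ℝ (fun z : EuclideanSpace ℝ (Fin (m + 1)) => 1 - ⟪b, z⟫) (ν x) :=
    (innerSL ℝ b).differentiableAt.const_sub 1
  have hu : MDifferentiableAt (𝓡 m) 𝓘(ℝ, ℝ) (fun z => 1 - ⟪b, ν z⟫) x :=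
    hsub.mdifferentiableAt.comp x hν
  have hderiv : logGradDeriv b ν (fun z => φ z * φ z * (1 - ⟪b, ν z⟫)) x =
      2 * φ x * (1 - ⟪b, ν x⟫) * logGradDeriv b ν φ x -
        φ x ^ 2 * (⟪b, ν x⟫ * ‖logGrad b ν x‖ ^ 2) := by
    rw [logGradDeriv_mul (f := fun z => φ z * φ z) (hd.mul hd) hu, logGradDeriv_mul hd hd,
      logGradDeriv_one_sub_inner hν (h.pos x).ne']
    ring
  rw [hderiv]
  by_cases hx : φ x = 0
  · simp [hx]
  · rw [indicator_of_mem (Function.mem_support.2 hx)]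
    have hle := two_mul_mul_mul_sub_le_of_abs_le (p := φ x) (h.pos x)
      (h.abs_logGradDeriv_le hφ hd)
    have hmul := mul_le_mul_of_nonneg_left hle (gaussWeight_pos c (ψ x)).le
    refine hmul.trans_eq ?_
    rw [tiltDensity]
    ring

variable [MeasurableSpace M] [BorelSpace M] [ProperSpace M]

theorem integrableOn_tiltDensity (h : IsTransversal b P ψ ν) {s : Set M}
    (hs : Bornology.IsBounded s) : IntegrableOn (tiltDensity c b ψ ν) s (graphMeasure m b ν) := by
  have := h.isLocallyFiniteMeasure_graphMeasure
  exact (h.continuous_tiltDensity.continuousOn.integrableOn_compact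
    hs.isCompact_closure).mono_set subset_closure

theorem integrable_sq_mul_tiltDensity (h : IsTransversal b P ψ ν) (hφ : Continuous φ)
    (hc : HasCompactSupport φ) :
    Integrable (fun x => φ x ^ 2 * tiltDensity c b ψ ν x) (graphMeasure m b ν) := by
  have := h.isLocallyFiniteMeasure_graphMeasure
  have hsq : HasCompactSupport fun x => φ x ^ 2 :=
    hc.comp_left (g := fun t : ℝ => t ^ 2) (zero_pow two_ne_zero)
  exact ((hφ.pow 2).mul h.continuous_tiltDensity).integrable_of_hasCompactSupport hsq.mul_right

theorem setIntegral_ball_tiltDensity_pos (h : IsTransversal b P ψ ν) (hx : ν x ≠ b) {o : M} {R : ℝ}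
    (hxR : x ∈ ball o R) : 0 < ∫ x in ball o R, tiltDensity c b ψ ν x ∂(graphMeasure m b ν) := by
  have := h.isOpenPosMeasure_graphMeasure
  rw [setIntegral_pos_iff_support_of_nonneg_ae (ae_of_all _ h.tiltDensity_nonneg)
    (h.integrableOn_tiltDensity isBounded_ball)]
  exact (h.continuous_tiltDensity.isOpen_support.inter isOpen_ball).measure_pos _
    ⟨x, fun h0 => hx (h.eq_of_tiltDensity_eq_zero h0), hxR⟩

theorem ofReal_setIntegral_ball_tiltDensity_le (h : IsTransversal b P ψ ν) (o : M) (R : ℝ) :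
    ENNReal.ofReal (∫ x in ball o R, tiltDensity c b ψ ν x ∂(graphMeasure m b ν)) ≤
      ∫⁻ x in ball o R, ENNReal.ofReal (gaussWeight c (ψ x)) ∂(riemannianVolume m M) := by
  rw [ofReal_integral_eq_lintegral_ofReal (h.integrableOn_tiltDensity isBounded_ball)
      (ae_of_all _ h.tiltDensity_nonneg), graphMeasure, restrict_withDensity measurableSet_ball,
    lintegral_withDensity_eq_lintegral_mul _ h.continuous_inner.measurable.ennreal_ofReal
      h.continuous_tiltDensity.measurable.ennreal_ofReal]
  refine lintegral_mono fun x => ?_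
  rw [Pi.mul_apply, ← ENNReal.ofReal_mul (h.pos x).le, h.inner_mul_tiltDensity]
  have hsq : (1 - ⟪b, ν x⟫) ^ 2 ≤ 1 :=
    pow_le_one₀ (by linarith [h.inner_le_one x]) (by linarith [h.pos x])
  exact ENNReal.ofReal_le_ofReal (mul_le_of_le_one_left (gaussWeight_pos c _).le hsq)

variable [IsRiemannianManifold (𝓡 m) M]

theorem integral_sq_mul_tiltDensity_le (h : IsTransversal b P ψ ν) (hsol : IsSoliton ψ ν c)
    (hv : ∀ x, 1 / (1 + normA ψ ν x ^ 2) ≤ ⟪b, ν x⟫) (hφ : LipschitzWith L φ)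
    (hc : HasCompactSupport φ) :
    ∫ x, φ x ^ 2 * tiltDensity c b ψ ν x ∂(graphMeasure m b ν) ≤
      L ^ 2 * ∫ x in Function.support φ, tiltDensity c b ψ ν x ∂(graphMeasure m b ν) := by
  have hu : LocallyLipschitz fun x => 1 - ⟪b, ν x⟫ := by
    have hsmooth : ContDiff ℝ ∞ fun z : EuclideanSpace ℝ (Fin (m + 1)) => 1 - ⟪b, z⟫ :=
      contDiff_const.sub (innerSL ℝ b).contDiff
    exact h.locallyLipschitz_of_contMDiff (hsmooth.contMDiff.comp h.isGaussMap.contMDiff)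
  have hφ_sq := locallyLipschitz_mul hφ.locallyLipschitz hφ.locallyLipschitz
  obtain ⟨hint_deriv, hint_normA, heq⟩ := h.weakJacobiEq hsol
    (locallyLipschitz_mul hφ_sq hu) hc.mul_left.mul_right
  have hmeas : MeasurableSet (Function.support φ) := hφ.continuous.isOpen_support.measurableSet
  have hint_supp : IntegrableOn (fun x => L ^ 2 * tiltDensity c b ψ ν x) (Function.support φ)
      (graphMeasure m b ν) :=
    (h.integrableOn_tiltDensity (hc.isCompact.isBounded.subset (subset_tsupport φ))).const_mul _
  calc ∫ x, φ x ^ 2 * tiltDensity c b ψ ν x ∂(graphMeasure m b ν)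
      ≤ ∫ x, φ x * φ x * (1 - ⟪b, ν x⟫) * (gaussWeight c (ψ x) * normA ψ ν x ^ 2)
          ∂(graphMeasure m b ν) := by
        refine integral_mono (h.integrable_sq_mul_tiltDensity hφ.continuous hc) hint_normA
          fun x => ?_
        have hle := mul_le_mul_of_nonneg_left (h.tiltDensity_le (c := c) (hv x)) (sq_nonneg (φ x))
        rw [← mul_assoc, sq (φ x)] at hle
        simpa only [sq] using hle
    _ = ∫ x, gaussWeight c (ψ x) * logGradDeriv b ν (fun z => φ z * φ z * (1 - ⟪b, ν z⟫)) x
          ∂(graphMeasure m b ν) := heq.symm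
    _ ≤ ∫ x, (Function.support φ).indicator (fun x => L ^ 2 * tiltDensity c b ψ ν x) x
          ∂(graphMeasure m b ν) := by
        refine integral_mono_ae hint_deriv (hint_supp.integrable_indicator hmeas) ?_
        filter_upwards [h.ae_mdifferentiableAt hφ.locallyLipschitz] with x hx
          using h.gaussWeight_mul_logGradDeriv_le hφ hx
    _ = L ^ 2 * ∫ x in Function.support φ, tiltDensity c b ψ ν x ∂(graphMeasure m b ν) := by
        rw [integral_indicator hmeas, integral_const_mul]

theorem sq_mul_setIntegral_ball_tiltDensity_le (h : IsTransversal b P ψ ν)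
    (hsol : IsSoliton ψ ν c) (hv : ∀ x, 1 / (1 + normA ψ ν x ^ 2) ≤ ⟪b, ν x⟫) {δ : ℝ} (hδ : 0 < δ)
    (o : M) (R : ℝ) :
    δ ^ 2 * ∫ x in ball o R, tiltDensity c b ψ ν x ∂(graphMeasure m b ν) ≤
      ∫ x in ball o (R + δ), tiltDensity c b ψ ν x ∂(graphMeasure m b ν) := by
  obtain ⟨φ, hφ, hone, hsupp⟩ := exists_lipschitzWith_cutoff hδ o R
  have hc : HasCompactSupport φ := HasCompactSupport.of_support_subset_isCompact
    (isCompact_closedBall o (R + δ)) (hsupp.trans ball_subset_closedBall)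
  have hnonneg := h.tiltDensity_nonneg (c := c)
  have hinner : ∫ x in ball o R, tiltDensity c b ψ ν x ∂(graphMeasure m b ν) ≤
      ∫ x, φ x ^ 2 * tiltDensity c b ψ ν x ∂(graphMeasure m b ν) := by
    rw [← integral_indicator measurableSet_ball]
    refine integral_mono
      ((h.integrableOn_tiltDensity isBounded_ball).integrable_indicator measurableSet_ball)
      (h.integrable_sq_mul_tiltDensity hφ.continuous hc) fun x => ?_
    refine indicator_le' (fun x hx => ?_) (fun x _ => mul_nonneg (sq_nonneg _) (hnonneg x)) x
    rw [hone x hx, one_pow, one_mul]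
  have houter : ∫ x in Function.support φ, tiltDensity c b ψ ν x ∂(graphMeasure m b ν) ≤
      ∫ x in ball o (R + δ), tiltDensity c b ψ ν x ∂(graphMeasure m b ν) :=
    setIntegral_mono_set (h.integrableOn_tiltDensity isBounded_ball) (ae_of_all _ hnonneg)
      hsupp.eventuallyLE
  have hcacc := hinner.trans (h.integral_sq_mul_tiltDensity_le hsol hv hφ hc)
  rw [NNReal.coe_inv, Real.coe_toNNReal δ hδ.le, inv_pow, ← div_eq_inv_mul,
    le_div_iff₀' (by positivity)] at hcacc
  exact hcacc.trans houter

theorem gaussMap_eq_const (h : IsTransversal b P ψ ν) (hsol : IsSoliton ψ ν c)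
    (hv : ∀ x, 1 / (1 + normA ψ ν x ^ 2) ≤ ⟪b, ν x⟫) {o : M}
    (hgrowth : weightedGrowth m (fun x => gaussWeight c (ψ x)) o < ((2 / Real.exp 1 : ℝ) : EReal))
    (x : M) : ν x = b := by
  by_contra hx
  refine hgrowth.not_ge ?_
  have hmono : Monotone fun R => ∫ x in ball o R, tiltDensity c b ψ ν x ∂(graphMeasure m b ν) :=
    fun r s hrs => setIntegral_mono_set (h.integrableOn_tiltDensity isBounded_ball)
      (ae_of_all _ h.tiltDensity_nonneg) (ball_subset_ball hrs).eventuallyLE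
  have hlog : Real.log (Real.exp 1 ^ 2) / Real.exp 1 = 2 / Real.exp 1 := by simp
  -- Cutoffs of width `δ` give the growth rate `log (δ ^ 2) / δ`, which is largest at `δ = e`.
  rw [← hlog]
  exact log_div_le_liminf_log_div hmono (Real.exp_pos 1) (one_le_pow₀ (by simp))
    (h.sq_mul_setIntegral_ball_tiltDensity_le hsol hv (Real.exp_pos 1) o)
    (h.setIntegral_ball_tiltDensity_pos hx (mem_ball.2 (lt_add_one (dist x o))))
    (h.ofReal_setIntegral_ball_tiltDensity_le o)

end IsTransversal

end Caccioppoli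

section Hyperplane

theorem surjective_of_forall_exists_lipschitzOnWith_section {X E : Type*} [PseudoMetricSpace X]
    [ProperSpace X] [Nonempty X] [NormedAddCommGroup E] [NormedSpace ℝ E] {f : X → E} {K : ℝ≥0}
    (hf : Continuous f)
    (hsec : ∀ x, ∃ r > 0, ∃ g : E → X, g (f x) = x ∧ LipschitzOnWith K g (ball (f x) r) ∧
      ∀ y ∈ ball (f x) r, f (g y) = y) : Function.Surjective f := by
  intro z
  let o : X := Classical.arbitrary X
  -- At a minimum of this proper function, moving `f x` towards `z` along the section pays off.
  have hcont : Continuous fun x => (K + 1) * dist (f x) z + dist x o := by fun_prop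
  have hproper : Tendsto (fun x => (K + 1) * dist (f x) z + dist x o) (cocompact X) atTop :=
    tendsto_atTop_mono (fun x => le_add_of_nonneg_left (by positivity))
      (tendsto_dist_right_cocompact_atTop o)
  obtain ⟨x, hmin⟩ := hcont.exists_forall_le hproper
  refine ⟨x, by_contra fun hne => ?_⟩
  obtain ⟨r, hr, g, hgx, hlip, hfg⟩ := hsec x
  have hnear : ∀ᶠ t in 𝓝[>] (0 : ℝ), AffineMap.lineMap (f x) z t ∈ ball (f x) r := by
    have hlim := AffineMap.lineMap_continuous (p := f x) (q := z) (R := ℝ)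
      |>.tendsto' 0 (f x) (AffineMap.lineMap_apply_zero _ _)
    exact (hlim.eventually (ball_mem_nhds _ hr)).filter_mono nhdsWithin_le_nhds
  obtain ⟨t, ht, ht0, ht1⟩ := (hnear.and (Ioo_mem_nhdsGT one_pos)).exists
  set y := AffineMap.lineMap (f x) z t
  have hyx : dist y (f x) = t * dist (f x) z := by
    rw [dist_lineMap_left, Real.norm_of_nonneg ht0.le]
  have hyz : dist y z = (1 - t) * dist (f x) z := by
    rw [dist_lineMap_right, Real.norm_of_nonneg (sub_nonneg.2 ht1.le)]
  have hgy : dist (g y) x ≤ K * (t * dist (f x) z) := by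
    simpa only [hgx, hyx] using hlip.dist_le_mul y ht (f x) (mem_ball_self hr)
  have hle := hmin (g y)
  rw [hfg y ht, hyz] at hle
  have hpos : 0 < t * dist (f x) z := mul_pos ht0 (dist_pos.2 hne)
  linarith [dist_triangle (g y) x o]

variable {m : ℕ} {M : Type*} [MetricSpace M] [ChartedSpace (EuclideanSpace ℝ (Fin m)) M]
  [RiemannianBundle (fun x : M => TangentSpace (𝓡 m) x)]
  {b : EuclideanSpace ℝ (Fin (m + 1))}
  {P : EuclideanSpace ℝ (Fin (m + 1)) →L[ℝ] EuclideanSpace ℝ (Fin m)}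
  {ψ ν : M → EuclideanSpace ℝ (Fin (m + 1))}
  {e : OpenPartialHomeomorph M (EuclideanSpace ℝ (Fin m))}

namespace IsTransversal

theorem norm_fderiv_comp_symm_le_one (h : IsTransversal b P ψ ν) (hb : ∀ x, ν x = b)
    (he : IsGraphChart P ψ e) {y : EuclideanSpace ℝ (Fin m)} (hy : y ∈ e.target) :
    ‖fderiv ℝ (fun y => ψ (e.symm y)) y‖ ≤ 1 := by
  have hgraph := h.isGraphParam he
  refine ContinuousLinearMap.opNorm_le_bound _ zero_le_one fun v => ?_
  have hnormal := hgraph.normal y hy v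
  rw [hb, real_inner_comm] at hnormal
  have hsq := h.isHorizontalProj.norm_sq_eq (fderiv ℝ (fun y => ψ (e.symm y)) y v)
  rw [hgraph.proj_fderiv hy, hnormal, zero_pow two_ne_zero, add_zero] at hsq
  rw [one_mul]
  exact ((sq_eq_sq₀ (norm_nonneg _) (norm_nonneg _)).1 hsq).le

theorem inner_eq_inner [IsRiemannianManifold (𝓡 m) M] (h : IsTransversal b P ψ ν)
    (hb : ∀ x, ν x = b) (x y : M) : ⟪b, ψ x⟫ = ⟪b, ψ y⟫ := by
  have hψ := h.isIsometricImmersion.contMDiff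
  have hderiv (x : M) (v : TangentSpace (𝓡 m) x) :
      mfderiv (𝓡 m) 𝓘(ℝ, ℝ) (fun z => ⟪b, ψ z⟫) x v = ⟪diff ψ x v, b⟫ :=
    (DFunLike.congr_fun ((innerSL ℝ b).hasMFDerivAt.comp x
      (hψ.mdifferentiableAt (by simp)).hasMFDerivAt).mfderiv v).trans
      (real_inner_comm (diff ψ x v) b)
  have hlip : LipschitzWith 0 fun z => ⟪b, ψ z⟫ :=
    lipschitzWith_of_forall_norm_mfderiv_le (𝓡 m)
      (((innerSL ℝ b).contDiff.contMDiff.comp hψ).of_le (by simp)) fun x v => by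
        have hzero := (hderiv x v).trans (hb x ▸ h.isGaussMap.normal x v)
        rw [hzero, NNReal.coe_zero, zero_mul]
        exact norm_zero.le
  exact (LipschitzWith.zero_iff _).1 hlip x y

variable [IsManifold (𝓡 m) ∞ M]

theorem mul_inner_eq_zero {c : ℝ} (h : IsTransversal b P ψ ν) (hsol : IsSoliton ψ ν c)
    (hb : ∀ x, ν x = b) (x : M) : c * ⟪b, ψ x⟫ = 0 := by
  obtain ⟨e, he, hx⟩ := h.exists_isGraphChart x
  have hconst : (fun y => ν (e.symm y)) = fun _ => b := funext fun y => hb _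
  have hop : gaussOp P (fun _ => b) (P (ψ x)) = 0 := by simp [gaussOp]
  have htrace := h.trace_gaussOp_eq hsol he (he.proj_mem_target hx)
  rw [hconst, he.symm_proj hx, hb, hop, real_inner_comm] at htrace
  simpa using htrace

variable [IsRiemannianManifold (𝓡 m) M] [ProperSpace M]

theorem surjective_proj [Nonempty M] (h : IsTransversal b P ψ ν) (hb : ∀ x, ν x = b) :
    Function.Surjective fun x => P (ψ x) := by
  have hψ := h.isIsometricImmersion
  refine surjective_of_forall_exists_lipschitzOnWith_section (K := 1)
    (P.continuous.comp hψ.contMDiff.continuous) fun x => ?_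
  obtain ⟨e, he, hx⟩ := h.exists_isGraphChart x
  obtain ⟨r, hr, hball⟩ := Metric.isOpen_iff.1 e.open_target _ (he.proj_mem_target hx)
  exact ⟨r, hr, e.symm, he.symm_proj hx,
    he.lipschitzOnWith_symm hψ (convex_ball _ _) hball
      fun y hy => h.norm_fderiv_comp_symm_le_one hb he (hball hy),
    fun y hy => he.proj_symm (hball hy)⟩

theorem range_eq_setOf_inner_eq (h : IsTransversal b P ψ ν) (hb : ∀ x, ν x = b) (o : M) :
    range ψ = {y | ⟪b, y⟫ = ⟪b, ψ o⟫} := by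
  have : Nonempty M := ⟨o⟩
  refine Subset.antisymm (range_subset_iff.2 fun x => h.inner_eq_inner hb x o) fun y hy => ?_
  obtain ⟨x, hx⟩ := h.surjective_proj hb (P y)
  refine ⟨x, sub_eq_zero.1 (h.isHorizontalProj.eq_zero ?_ ?_)⟩
  · rw [map_sub, sub_eq_zero]
    exact hx
  · rw [inner_sub_right, h.inner_eq_inner hb x o, sub_eq_zero]
    exact hy.symm

end IsTransversal

end Hyperplane
end MCFSoliton

end

theorem stmt12_general {m : ℕ} {M : Type*} [MetricSpace M] [CompleteSpace M]
    [MeasurableSpace M] [BorelSpace M]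
    [ChartedSpace (EuclideanSpace ℝ (Fin m)) M] [IsManifold (𝓡 m) ∞ M]
    [RiemannianBundle (fun x : M => TangentSpace (𝓡 m) x)] [IsRiemannianManifold (𝓡 m) M]
    (ψ ν : M → EuclideanSpace ℝ (Fin (m + 1)))
    (hψ : MCFSoliton.IsIsometricImmersion ψ) (hν : MCFSoliton.IsGaussMap ψ ν)
    (c : ℝ) (hsol : MCFSoliton.IsSoliton ψ ν c)
    (o : M)
    (hgrowth : MCFSoliton.weightedGrowth m (fun x => Real.exp (c * (‖ψ x‖ ^ 2 / 2))) o <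
      ((2 / Real.exp 1 : ℝ) : EReal))
    (b : EuclideanSpace ℝ (Fin (m + 1))) (hb : ‖b‖ = 1)
    (hv : ∀ x, 1 / (1 + MCFSoliton.normA ψ ν x ^ 2) ≤ ⟪b, ν x⟫) :
    (∃ a : ℝ, range ψ = {y | ⟪b, y⟫ = a}) ∧ (c ≠ 0 → 0 ∈ range ψ) := by
  have : ProperSpace M := MCFSoliton.properSpace_of_isRiemannianManifold (𝓡 m)
  have hpos (x : M) : 0 < ⟪b, ν x⟫ := lt_of_lt_of_le (by positivity) (hv x)
  obtain ⟨P, hP⟩ := MCFSoliton.exists_isHorizontalProj (m := m) (by simp) hb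
  have htrans : MCFSoliton.IsTransversal b P ψ ν := ⟨hP, hψ, hν, hpos⟩
  have hνb : ∀ x, ν x = b := htrans.gaussMap_eq_const hsol hv hgrowth
  have hrange := htrans.range_eq_setOf_inner_eq hνb o
  refine ⟨⟨_, hrange⟩, fun hc => ?_⟩
  have hheight := (mul_eq_zero.1 (htrans.mul_inner_eq_zero hsol hνb o)).resolve_left hc
  rw [hrange, hheight]
  exact inner_zero_right b

theorem stmt12 {m : ℕ} {M : Type*} [MetricSpace M] [ConnectedSpace M] [CompleteSpace M]
    [NoncompactSpace M] [SecondCountableTopology M] [MeasurableSpace M] [BorelSpace M]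
    [ChartedSpace (EuclideanSpace ℝ (Fin m)) M] [IsManifold (𝓡 m) ∞ M]
    [RiemannianBundle (fun x : M => TangentSpace (𝓡 m) x)]
    [IsContMDiffRiemannianBundle (𝓡 m) ∞ (EuclideanSpace ℝ (Fin m))
      (fun x : M => TangentSpace (𝓡 m) x)]
    [IsRiemannianManifold (𝓡 m) M]
    (ψ ν : M → EuclideanSpace ℝ (Fin (m + 1)))
    (hψ : MCFSoliton.IsIsometricImmersion ψ) (hν : MCFSoliton.IsGaussMap ψ ν)
    (c : ℝ) (hsol : MCFSoliton.IsSoliton ψ ν c)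
    (o : M)
    (hgrowth : MCFSoliton.weightedGrowth m (fun x => Real.exp (c * (‖ψ x‖ ^ 2 / 2))) o = 0)
    (hA : ∃ C : ℝ, ∀ x, MCFSoliton.normA ψ ν x ≤ C)
    (b : EuclideanSpace ℝ (Fin (m + 1))) (hb : ‖b‖ = 1)
    (hv : ∀ x, 1 / (1 + MCFSoliton.normA ψ ν x ^ 2) ≤ ⟪b, ν x⟫) :
    (∃ a : ℝ, range ψ = {y | ⟪b, y⟫ = a}) ∧ (c ≠ 0 → 0 ∈ range ψ) :=
  stmt12_general ψ ν hψ hν c hsol o (hgrowth.trans_lt (by positivity)) b hb hv
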